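/- Let f ∈ ℬ be convenient and Newton nondegenerate with Newton polytope P, and assume that every closed face of the Newton boundary of P is a simplex. Let v ∈ Box(P) ∩ ℕⁿ be a point all of whose coordinates are ≥ 1 (i.e. v does not belong to any coordinate hyperplane), and let Δ(v) be the smallest closed face Δ of the Newton boundary with v ∈ ℝ₊·Δ. Then for every integer j with 0 ≤ j ≤ n − 1 − dim Δ(v), one has gr^𝒩_{ν(v)+j}(ℬ/ℒ) ≠ 0; that is, the values ν(v), ν(v)+1, …, ν(v) + n − 1 − dim Δ(v) all occur in the toric Newton spectrum of f. -/

import Mathlib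

open MvPolynomial

namespace ToricNewton

section
variable {σ : Type*} [Fintype σ] [DecidableEq σ]

/-- Coercion of a lattice point of `ℕ^σ` into `ℝ^σ`. -/
def natToR (v : σ → ℕ) : σ → ℝ := fun i => (v i : ℝ)

/-- Coercion of an exponent (finitely supported) into `ℝ^σ`. -/
def toR (m : σ →₀ ℕ) : σ → ℝ := fun i => (m i : ℝ)

/-- The Newton polytope of a polynomial: the convex hull of `{0} ∪ supp f`. -/
noncomputable def newtonPolytope (f : MvPolynomial σ ℂ) : Set (σ → ℝ) :=
  convexHull ℝ ({0} ∪ (toR '' (f.support : Set (σ →₀ ℕ))))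

/-- The Newton function `ν`, which for a convenient polynomial is the gauge
(Minkowski functional) of the Newton polytope. -/
noncomputable def nu (f : MvPolynomial σ ℂ) (x : σ → ℝ) : ℝ :=
  gauge (newtonPolytope f) x

/-- `f` is convenient if for each variable `i` some pure power `uᵢ^k`, `k ≥ 1`,
occurs in `f` with nonzero coefficient. -/
def Convenient (f : MvPolynomial σ ℂ) : Prop :=
  ∀ i : σ, ∃ k : ℕ, 1 ≤ k ∧ f.coeff (Finsupp.single i k) ≠ 0

/-- `Δ` is a (nonempty exposed) closed face of `P`. -/
def IsFace (P Δ : Set (σ → ℝ)) : Prop :=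
  Δ.Nonempty ∧ ∃ (l : (σ → ℝ) →ₗ[ℝ] ℝ) (c : ℝ),
    (∀ x ∈ P, l x ≤ c) ∧ Δ = {x ∈ P | l x = c}

/-- A face of the Newton boundary: a closed face of the Newton polytope not
containing the origin. -/
def NBFace (f : MvPolynomial σ ℂ) (Δ : Set (σ → ℝ)) : Prop :=
  IsFace (newtonPolytope f) Δ ∧ (0 : σ → ℝ) ∉ Δ

open Classical in
/-- The truncation `g_Δ` of `g` to the monomials whose exponents lie in `Δ`. -/
noncomputable def faceRestrict (Δ : Set (σ → ℝ)) (g : MvPolynomial σ ℂ) : MvPolynomial σ ℂ :=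
  ∑ m ∈ g.support, if toR m ∈ Δ then monomial m (g.coeff m) else 0

/-- `f` is Newton nondegenerate: for every closed face `Δ` of the Newton boundary
the system `(u₁ ∂f/∂u₁)_Δ = ⋯ = (uₙ ∂f/∂uₙ)_Δ = 0` has no solution in `(ℂ*)ⁿ`. -/
def Nondegenerate (f : MvPolynomial σ ℂ) : Prop :=
  ∀ Δ : Set (σ → ℝ), NBFace f Δ →
    ¬ ∃ x : σ → ℂ, (∀ i, x i ≠ 0) ∧
        ∀ i, eval x (faceRestrict Δ (X i * pderiv i f)) = 0

/-- The ideal `ℒ` generated by the `uᵢ ∂f/∂uᵢ`. -/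
noncomputable def LIdeal (f : MvPolynomial σ ℂ) : Ideal (MvPolynomial σ ℂ) :=
  Ideal.span (Set.range fun i => X i * pderiv i f)

/-- The Jacobian ideal `ℐ` generated by the `∂f/∂uᵢ`. -/
noncomputable def IIdeal (f : MvPolynomial σ ℂ) : Ideal (MvPolynomial σ ℂ) :=
  Ideal.span (Set.range fun i => pderiv i f)

/-- The Newton filtration `𝒩_α ℬ`: the span of the monomials `u^m` with `ν(m) ≤ α`. -/
noncomputable def Nle (f : MvPolynomial σ ℂ) (α : ℝ) : Submodule ℂ (MvPolynomial σ ℂ) where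
  carrier := {g | ∀ m ∈ g.support, nu f (toR m) ≤ α}
  zero_mem' := by simp
  add_mem' := by
    intro a b ha hb m hm
    rcases Finset.mem_union.mp (MvPolynomial.support_add hm) with h | h
    · exact ha m h
    · exact hb m h
  smul_mem' := by
    intro c a ha m hm
    exact ha m (MvPolynomial.support_smul hm)

/-- The filtration `𝒩_{<α} ℬ`. -/
noncomputable def Nlt (f : MvPolynomial σ ℂ) (α : ℝ) : Submodule ℂ (MvPolynomial σ ℂ) where
  carrier := {g | ∀ m ∈ g.support, nu f (toR m) < α}
  zero_mem' := by simp
  add_mem' := by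
    intro a b ha hb m hm
    rcases Finset.mem_union.mp (MvPolynomial.support_add hm) with h | h
    · exact ha m h
    · exact hb m h
  smul_mem' := by
    intro c a ha m hm
    exact ha m (MvPolynomial.support_smul hm)

/-- The twisted filtration `W_α ℬ`: the span of the monomials `u^m` with
`ν(m + (1,…,1)) ≤ α`. -/
noncomputable def Wle (f : MvPolynomial σ ℂ) (α : ℝ) : Submodule ℂ (MvPolynomial σ ℂ) where
  carrier := {g | ∀ m ∈ g.support, nu f (toR m + 1) ≤ α}
  zero_mem' := by simp
  add_mem' := by
    intro a b ha hb m hm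
    rcases Finset.mem_union.mp (MvPolynomial.support_add hm) with h | h
    · exact ha m h
    · exact hb m h
  smul_mem' := by
    intro c a ha m hm
    exact ha m (MvPolynomial.support_smul hm)

/-- The twisted filtration `W_{<α} ℬ`. -/
noncomputable def Wlt (f : MvPolynomial σ ℂ) (α : ℝ) : Submodule ℂ (MvPolynomial σ ℂ) where
  carrier := {g | ∀ m ∈ g.support, nu f (toR m + 1) < α}
  zero_mem' := by simp
  add_mem' := by
    intro a b ha hb m hm
    rcases Finset.mem_union.mp (MvPolynomial.support_add hm) with h | h
    · exact ha m h
    · exact hb m h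
  smul_mem' := by
    intro c a ha m hm
    exact ha m (MvPolynomial.support_smul hm)

/-- The graded piece `gr^𝒩_α(ℬ/ℒ) = (𝒩_α ℬ + ℒ)/(𝒩_{<α} ℬ + ℒ)`, realized as the
image of `𝒩_α ℬ + ℒ` in `ℬ/(𝒩_{<α} ℬ + ℒ)`. -/
noncomputable def grN (f : MvPolynomial σ ℂ) (α : ℝ) :
    Submodule ℂ (MvPolynomial σ ℂ ⧸ (Nlt f α ⊔ (LIdeal f).restrictScalars ℂ)) :=
  Submodule.map (Nlt f α ⊔ (LIdeal f).restrictScalars ℂ).mkQ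
    (Nle f α ⊔ (LIdeal f).restrictScalars ℂ)

/-- `dim_ℂ gr^𝒩_α(ℬ/ℒ)`. -/
noncomputable def grDim (f : MvPolynomial σ ℂ) (α : ℝ) : ℕ :=
  Module.finrank ℂ (grN f α)

/-- The graded piece `gr^W_α(ℬ/ℐ) = (W_α ℬ + ℐ)/(W_{<α} ℬ + ℐ)`. -/
noncomputable def grW (f : MvPolynomial σ ℂ) (α : ℝ) :
    Submodule ℂ (MvPolynomial σ ℂ ⧸ (Wlt f α ⊔ (IIdeal f).restrictScalars ℂ)) :=
  Submodule.map (Wlt f α ⊔ (IIdeal f).restrictScalars ℂ).mkQ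
    (Wle f α ⊔ (IIdeal f).restrictScalars ℂ)

/-- `dim_ℂ gr^W_α(ℬ/ℐ)`. -/
noncomputable def grWDim (f : MvPolynomial σ ℂ) (α : ℝ) : ℕ :=
  Module.finrank ℂ (grW f α)

/-- The dimension of a face, i.e. of the direction of its affine span. -/
noncomputable def faceDim (Δ : Set (σ → ℝ)) : ℕ :=
  Module.finrank ℝ (affineSpan ℝ Δ).direction

/-- `Δ` is a simplex: the convex hull of an affinely independent family. -/
def IsSimplex (Δ : Set (σ → ℝ)) : Prop :=
  ∃ (k : ℕ) (p : Fin (k + 1) → (σ → ℝ)), AffineIndependent ℝ p ∧ Δ = convexHull ℝ (Set.range p)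

/-- The union of the coordinate hyperplanes. -/
def coordHyperplanes (σ : Type*) : Set (σ → ℝ) := ⋃ i : σ, {x : σ → ℝ | x i = 0}

/-- `Box(Δ)`: the set of combinations `Σ q_ℓ b_ℓ`, `q_ℓ ∈ [0,1)`, of the vertices
(extreme points) of `Δ`. -/
def Box (Δ : Set (σ → ℝ)) : Set (σ → ℝ) :=
  {x | ∃ s : Finset (σ → ℝ), ↑s ⊆ Δ.extremePoints ℝ ∧
      ∃ q : (σ → ℝ) → ℝ, (∀ b ∈ s, 0 ≤ q b ∧ q b < 1) ∧ x = ∑ b ∈ s, q b • b}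

/-- `Δ ∈ ℱ(P)`: a closed face of the Newton polytope of `f` not contained in the
union of the coordinate hyperplanes. -/
def FcalMem (f : MvPolynomial σ ℂ) (Δ : Set (σ → ℝ)) : Prop :=
  IsFace (newtonPolytope f) Δ ∧ ¬ Δ ⊆ coordHyperplanes σ

/-- `Box(P)`: the union of `Box(Δ)` over the closed faces of the Newton boundary
not contained in the union of the coordinate hyperplanes. -/
def BoxP (f : MvPolynomial σ ℂ) : Set (σ → ℝ) :=
  ⋃ Δ ∈ {Δ : Set (σ → ℝ) | NBFace f Δ ∧ ¬ Δ ⊆ coordHyperplanes σ}, Box Δ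

/-- The cone `ℝ₊·Δ` over `Δ`. -/
def cone0 (Δ : Set (σ → ℝ)) : Set (σ → ℝ) :=
  {x | ∃ t : ℝ, 0 ≤ t ∧ ∃ y ∈ Δ, x = t • y}

/-- The restriction of `f` obtained by setting the variables in `S` to zero. -/
noncomputable def restrictZero (S : Finset σ) (f : MvPolynomial σ ℂ) :
    MvPolynomial {j : σ // j ∉ S} ℂ :=
  aeval (fun j : σ => if h : j ∉ S then X (⟨j, h⟩ : {j : σ // j ∉ S}) else 0) f

end

end ToricNewton

set_option linter.unusedSectionVars false

namespace ToricNewton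
section Abstract
open Pointwise
variable {A M ι : Type*} [CommRing A] [AddCommGroup M] [Module A M] [DecidableEq ι]

/-- The submodule generated by the `x p`, `p ∈ P` and the `F q`, `q ∈ Q`. -/
def UU (M : Type*) [AddCommGroup M] [Module A M] (x F : ι → A) (P Q : Finset ι) : Submodule A M :=
  Ideal.span (x '' P ∪ F '' Q) • ⊤

theorem mem_sup_span (y : A) (I : Set A) (m : M) :
    m ∈ (Ideal.span (insert y I) • (⊤ : Submodule A M)) ↔
      ∃ m' : M, m - y • m' ∈ (Ideal.span I • (⊤ : Submodule A M)) := by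
  rw [Ideal.span_insert, Submodule.sup_smul, Submodule.ideal_span_singleton_smul, Submodule.mem_sup]
  constructor
  · rintro ⟨a, ha, b, hb, rfl⟩
    obtain ⟨c, -, rfl⟩ := (Submodule.mem_smul_pointwise_iff_exists _ _ _).1 ha
    exact ⟨c, by simpa using hb⟩
  · rintro ⟨m', h⟩
    exact ⟨y • m', Submodule.smul_mem_pointwise_smul _ _ _ trivial, _, h, by simp⟩

theorem mem_UU_insert_right (x F : ι → A) (P Q : Finset ι) (q : ι) (m : M) :
    m ∈ UU M x F P (insert q Q) ↔ ∃ m' : M, m - F q • m' ∈ UU M x F P Q := by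
  unfold UU
  rw [← mem_sup_span, Finset.coe_insert, Set.image_insert_eq, Set.union_insert]

theorem mem_UU_insert_left (x F : ι → A) (P Q : Finset ι) (q : ι) (m : M) :
    m ∈ UU M x F (insert q P) Q ↔ ∃ m' : M, m - x q • m' ∈ UU M x F P Q := by
  unfold UU
  rw [← mem_sup_span, Finset.coe_insert, Set.image_insert_eq, Set.insert_union]

theorem swap1 (U : Submodule A M) (x F : A)
    (hsep : ∀ m : M, (∀ k : ℕ, ∃ m' : M, m - x ^ k • m' ∈ U) → m ∈ U)
    (hx : ∀ m : M, x • m ∈ U → m ∈ U)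
    (hF : ∀ m : M, (∃ m', F • m - x • m' ∈ U) → ∃ m', m - x • m' ∈ U)
    (m : M) (hm : F • m ∈ U) : m ∈ U := by
  apply hsep
  suffices ∀ k : ℕ, ∃ m' : M, m - x ^ k • m' ∈ U ∧ F • m' ∈ U from
    fun k => (this k).imp fun _ h => h.1
  intro k
  induction k with
  | zero => exact ⟨m, by simp, hm⟩
  | succ k ih =>
    obtain ⟨m', h1, h2⟩ := ih
    obtain ⟨m'', h3⟩ := hF m' ⟨0, by simpa using h2⟩
    refine ⟨m'', ?_, hx _ ?_⟩
    · have := U.add_mem h1 (U.smul_mem (x ^ k) h3)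
      convert this using 1
      rw [smul_sub, smul_smul, pow_succ]; abel
    · have := U.sub_mem h2 (U.smul_mem F h3)
      convert this using 1
      rw [smul_sub, smul_comm F x]; abel

theorem swap2 (U : Submodule A M) (x F : A)
    (hx : ∀ m : M, x • m ∈ U → m ∈ U)
    (hF : ∀ m : M, (∃ m', F • m - x • m' ∈ U) → ∃ m', m - x • m' ∈ U)
    (m : M) (hm : ∃ m', x • m - F • m' ∈ U) : ∃ m', m - F • m' ∈ U := by
  obtain ⟨y, hy⟩ := hm
  obtain ⟨y', hy'⟩ := hF y ⟨m, by simpa using U.neg_mem hy⟩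
  refine ⟨y', hx _ ?_⟩
  have := U.add_mem hy (U.smul_mem F hy')
  convert this using 1
  rw [smul_sub, smul_sub, smul_comm F x]; abel

theorem master [Fintype ι] (x F : ι → A)
    (hsep : ∀ (P Q : Finset ι) (c : ι) (m : M),
      (∀ k : ℕ, ∃ m' : M, m - x c ^ k • m' ∈ UU M x F P Q) → m ∈ UU M x F P Q)
    (hx : ∀ (P : Finset ι) (c : ι), c ∉ P → ∀ m : M, x c • m ∈ UU M x F P ∅ → m ∈ UU M x F P ∅)
    (hrad : ∀ (P Q : Finset ι) (c : ι), Disjoint P Q → c ∉ P → c ∉ Q →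
      (∀ i, i ∈ P ∨ i ∈ Q ∨ i = c) →
      ∃ k : ℕ, x c ^ k ∈ Ideal.span (insert (F c) (x '' P ∪ F '' Q))) :
    ∀ (Q P : Finset ι) (c : ι), Disjoint P Q → c ∉ P → c ∉ Q → ∀ m : M,
      (x c • m ∈ UU M x F P Q → m ∈ UU M x F P Q) ∧
      (F c • m ∈ UU M x F P Q → m ∈ UU M x F P Q) := by
  intro Q
  induction Q using Finset.induction_on with
  | empty =>
    intro P
    refine part2 ∅ ?_ P
    intro P c _ h _ m
    exact hx P c h m
  | insert q Q hq ih =>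
    intro P
    refine part2 (insert q Q) ?_ P
    intro P c hd hcP hcQ m
    rw [Finset.mem_insert, not_or] at hcQ
    rw [Finset.disjoint_insert_right] at hd
    rw [mem_UU_insert_right, mem_UU_insert_right]
    refine swap2 _ _ _ (fun m => (ih P c hd.2 hcP hcQ.2 m).1) ?_ m
    intro m
    have := (ih (insert c P) q (by rw [Finset.disjoint_insert_left]; exact ⟨hcQ.2, hd.2⟩)
      (by rw [Finset.mem_insert, not_or]; exact ⟨fun h => hcQ.1 h.symm, hd.1⟩) hq m).2
    rwa [mem_UU_insert_left, mem_UU_insert_left] at this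
where
  part2 (Q : Finset ι)
      (hxQ : ∀ (P : Finset ι) (c : ι), Disjoint P Q → c ∉ P → c ∉ Q → ∀ m : M,
        (x c • m ∈ UU M x F P Q → m ∈ UU M x F P Q)) (P : Finset ι) :
      ∀ (c : ι), Disjoint P Q → c ∉ P → c ∉ Q → ∀ m : M,
      (x c • m ∈ UU M x F P Q → m ∈ UU M x F P Q) ∧
      (F c • m ∈ UU M x F P Q → m ∈ UU M x F P Q) := by
    induction hk : (Finset.univ \ P).card using Nat.strong_induction_on generalizing P with
    | _ k ih =>
    intro c hd hcP hcQ m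
    refine ⟨hxQ P c hd hcP hcQ m, ?_⟩
    by_cases hall : ∀ i, i ∈ P ∨ i ∈ Q ∨ i = c
    · intro hm
      obtain ⟨k, hk⟩ := hrad P Q c hd hcP hcQ hall
      have hxk : ∀ k : ℕ, x c ^ k • m ∈ UU M x F P Q → m ∈ UU M x F P Q := by
        intro k
        induction k with
        | zero => simp
        | succ k ihk =>
          intro h
          apply ihk
          apply hxQ P c hd hcP hcQ
          rwa [smul_smul, ← pow_succ']
      apply hxk k
      obtain ⟨a, z, hz, hxz⟩ := Ideal.mem_span_insert.1 hk
      rw [hxz, add_smul, mul_smul]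
      exact (UU M x F P Q).add_mem (Submodule.smul_mem _ _ hm)
        (Submodule.smul_mem_smul hz trivial)
    · push Not at hall
      obtain ⟨r, hrP, hrQ, hrc⟩ := hall
      refine swap1 _ (x r) (F c) (hsep P Q r) (hxQ P r hd hrP hrQ) ?_ m
      intro m
      have := (ih (Finset.univ \ (insert r P)).card ?_ (insert r P) rfl c
        (by rw [Finset.disjoint_insert_left]; exact ⟨hrQ, hd⟩)
        (by rw [Finset.mem_insert, not_or]; exact ⟨fun h => hrc h.symm, hcP⟩) hcQ m).2
      · rwa [mem_UU_insert_left, mem_UU_insert_left] at this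
      · rw [← hk]
        apply Finset.card_lt_card
        rw [Finset.ssubset_iff_of_subset (by intro i; simp)]
        exact ⟨r, by simp [hrP], by simp⟩

theorem mem_UU_empty_left (x F : ι → A) (Q : Finset ι) (m : M) :
    m ∈ UU M x F ∅ Q → ∃ h : ι → M, m = ∑ q ∈ Q, F q • h q := by
  induction Q using Finset.induction_on generalizing m with
  | empty => intro h; simpa [UU] using h
  | insert q Q hq ih =>
    rw [mem_UU_insert_right]
    rintro ⟨m', h⟩
    obtain ⟨g, hg⟩ := ih _ h
    refine ⟨Function.update g q m', ?_⟩
    rw [Finset.sum_insert hq, Function.update_self, sub_eq_iff_eq_add'.1 hg]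
    congr 1
    refine Finset.sum_congr rfl fun i hi => ?_
    rw [Function.update_of_ne]
    rintro rfl; exact hq hi

theorem smul_mem_UU (x F : ι → A) {P Q : Finset ι} {q : ι} (h : q ∈ Q) (m : M) :
    F q • m ∈ UU M x F P Q :=
  Submodule.smul_mem_smul (Ideal.subset_span (Or.inr ⟨q, h, rfl⟩)) trivial

theorem smul_mem_UU' (x F : ι → A) {P Q : Finset ι} {q : ι} (h : q ∈ P) (m : M) :
    x q • m ∈ UU M x F P Q :=
  Submodule.smul_mem_smul (Ideal.subset_span (Or.inl ⟨q, h, rfl⟩)) trivial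

theorem koszul (x F : ι → A)
    (hF : ∀ (Q : Finset ι) (c : ι), c ∉ Q → ∀ m : M, F c • m ∈ UU M x F ∅ Q → m ∈ UU M x F ∅ Q)
    (Q : Finset ι) (g : ι → M) (hg : ∑ i ∈ Q, F i • g i = 0) :
    ∃ k : ι → ι → M, (∀ i j, k i j = - k j i) ∧ ∀ i ∈ Q, g i = ∑ j ∈ Q, F j • k i j := by
  induction Q using Finset.induction_on generalizing g with
  | empty => exact ⟨fun _ _ => 0, by simp, by simp⟩
  | insert q Q hq ih =>
    rw [Finset.sum_insert hq] at hg
    have h1 : g q ∈ UU M x F ∅ Q := by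
      apply hF Q q hq
      rw [eq_neg_of_add_eq_zero_left hg]
      exact Submodule.neg_mem _ (Submodule.sum_mem _ fun i hi => smul_mem_UU _ _ hi _)
    obtain ⟨h, hh⟩ := mem_UU_empty_left _ _ _ _ h1
    obtain ⟨k, hk1, hk2⟩ := ih (fun i => g i + F q • h i) (by
      rw [← hg, hh, Finset.smul_sum, ← Finset.sum_add_distrib]
      refine Finset.sum_congr rfl fun i _ => ?_
      rw [smul_add, smul_comm, add_comm])
    have hne : ∀ i ∈ Q, i ≠ q := by rintro i hi rfl; exact hq hi
    refine ⟨fun i j => if i = q then (if j = q then 0 else h j) else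
      (if j = q then - h i else k i j), ?_, ?_⟩
    · intro i j
      by_cases hi : i = q <;> by_cases hj : j = q <;> simp [hi, hj]
      exact hk1 i j
    · intro i hi
      rw [Finset.sum_insert hq]
      rcases Finset.mem_insert.1 hi with rfl | hi
      · simp only [if_true, smul_zero, zero_add]
        rw [hh]
        exact Finset.sum_congr rfl fun j hj => by rw [if_neg (hne j hj)]
      · simp only [if_neg (hne i hi), if_true]
        have := hk2 i hi
        rw [smul_neg, eq_neg_add_iff_add_eq, add_comm, this]
        exact Finset.sum_congr rfl fun j hj => by rw [if_neg (hne j hj)]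

end Abstract

theorem linalg {K X Y : Type*} [Field K] [AddCommGroup X] [Module K X] [AddCommGroup Y] [Module K Y]
    [FiniteDimensional K X] [FiniteDimensional K Y] (X0 : Submodule K X) (Y0 : Submodule K Y)
    (φ ψ : X →ₗ[K] Y) (h1 : ∀ x, φ x ∈ Y0 ↔ x ∈ X0) (h2 : ∀ x, ψ x ∈ Y0 ↔ x ∈ X0)
    (hs : ∀ y, ∃ x, y - φ x ∈ Y0) : ∀ y, ∃ x, y - ψ x ∈ Y0 := by
  let a := X0.mapQ Y0 φ (fun x hx => (h1 x).2 hx)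
  let b := X0.mapQ Y0 ψ (fun x hx => (h2 x).2 hx)
  have ha : Function.Injective a := by
    rw [injective_iff_map_eq_zero]
    intro q
    induction q using Submodule.Quotient.induction_on with | _ x =>
    intro h
    rw [Submodule.mapQ_apply, Submodule.Quotient.mk_eq_zero, h1] at h
    rwa [Submodule.Quotient.mk_eq_zero]
  have hb : Function.Injective b := by
    rw [injective_iff_map_eq_zero]
    intro q
    induction q using Submodule.Quotient.induction_on with | _ x =>
    intro h
    rw [Submodule.mapQ_apply, Submodule.Quotient.mk_eq_zero, h2] at h
    rwa [Submodule.Quotient.mk_eq_zero]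
  have hsa : Function.Surjective a := by
    intro q
    induction q using Submodule.Quotient.induction_on with | _ y =>
    obtain ⟨x, hx⟩ := hs y
    refine ⟨Submodule.Quotient.mk x, ?_⟩
    rw [Submodule.mapQ_apply, eq_comm, Submodule.Quotient.eq]
    exact hx
  have hd := (LinearEquiv.ofBijective a ⟨ha, hsa⟩).finrank_eq
  have hsb : Function.Surjective b :=
    (LinearMap.injective_iff_surjective_of_finrank_eq_finrank hd).1 hb
  intro y
  obtain ⟨q, hq⟩ := hsb (Submodule.Quotient.mk y)
  induction q using Submodule.Quotient.induction_on with | _ x =>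
  rw [Submodule.mapQ_apply, eq_comm, Submodule.Quotient.eq] at hq
  exact ⟨x, hq⟩
end ToricNewton

namespace ToricNewton

/-! ### Projections of polynomials -/
section Proj
variable {σ : Type*}
open Classical in
/-- Keep only the monomials whose exponent satisfies `T`. -/
noncomputable def proj (T : (σ →₀ ℕ) → Prop) (g : MvPolynomial σ ℂ) : MvPolynomial σ ℂ :=
  ∑ a ∈ g.support, if T a then monomial a (g.coeff a) else 0

open Classical in
theorem coeff_proj (T : (σ →₀ ℕ) → Prop) (g : MvPolynomial σ ℂ) (a : σ →₀ ℕ) :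
    (proj T g).coeff a = if T a then g.coeff a else 0 := by
  unfold proj
  rw [coeff_sum, Finset.sum_eq_single a]
  · split_ifs <;> simp
  · intro b _ hb
    split_ifs <;> simp [coeff_monomial, hb]
  · intro h
    rw [notMem_support_iff] at h
    split_ifs <;> simp [h]

theorem proj_add (T : (σ →₀ ℕ) → Prop) (g h : MvPolynomial σ ℂ) :
    proj T (g + h) = proj T g + proj T h := by
  ext a; simp only [coeff_proj, coeff_add]; split_ifs <;> simp

theorem proj_sub (T : (σ →₀ ℕ) → Prop) (g h : MvPolynomial σ ℂ) :
    proj T (g - h) = proj T g - proj T h := by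
  ext a; simp only [coeff_proj, coeff_sub]; split_ifs <;> simp

theorem proj_neg (T : (σ →₀ ℕ) → Prop) (g : MvPolynomial σ ℂ) :
    proj T (-g) = - proj T g := by
  ext a; simp only [coeff_proj, coeff_neg]; split_ifs <;> simp

theorem proj_zero (T : (σ →₀ ℕ) → Prop) : proj T (0 : MvPolynomial σ ℂ) = 0 := by
  ext a; simp only [coeff_proj, coeff_zero]; split_ifs <;> simp

theorem proj_sum {ι : Type*} (T : (σ →₀ ℕ) → Prop) (s : Finset ι) (g : ι → MvPolynomial σ ℂ) :
    proj T (∑ i ∈ s, g i) = ∑ i ∈ s, proj T (g i) := by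
  classical
  induction s using Finset.induction_on with
  | empty => simp [proj_zero]
  | insert i s hi ih => rw [Finset.sum_insert hi, Finset.sum_insert hi, proj_add, ih]

theorem mem_support_proj (T : (σ →₀ ℕ) → Prop) (g : MvPolynomial σ ℂ) (a : σ →₀ ℕ) :
    a ∈ (proj T g).support ↔ a ∈ g.support ∧ T a := by
  rw [mem_support_iff, mem_support_iff, coeff_proj]
  split_ifs with h <;> simp [h]

theorem proj_eq_self (T : (σ →₀ ℕ) → Prop) (g : MvPolynomial σ ℂ) (h : ∀ a ∈ g.support, T a) :
    proj T g = g := by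
  ext a
  rw [coeff_proj]
  split_ifs with hT
  · rfl
  · by_contra h'
    exact hT (h a (mem_support_iff.2 (Ne.symm h')))

theorem proj_eq_zero (T : (σ →₀ ℕ) → Prop) (g : MvPolynomial σ ℂ) (h : ∀ a ∈ g.support, ¬ T a) :
    proj T g = 0 := by
  ext a
  rw [coeff_proj, coeff_zero]
  split_ifs with hT
  · by_contra h'
    exact h a (mem_support_iff.2 h') hT
  · rfl

theorem proj_mul (T T' : (σ →₀ ℕ) → Prop) (F g : MvPolynomial σ ℂ)
    (h : ∀ m ∈ F.support, ∀ a ∈ g.support, T (m + a) ↔ T' a) : proj T (F * g) = F * proj T' g := by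
  classical
  ext e
  rw [coeff_proj, coeff_mul, coeff_mul]
  split_ifs with hT
  · refine Finset.sum_congr rfl fun p hp => ?_
    rw [coeff_proj]
    replace hp := Finset.HasAntidiagonal.mem_antidiagonal.1 hp
    split_ifs with h'
    · rfl
    · by_cases h1 : p.1 ∈ F.support
      · by_cases h2 : p.2 ∈ g.support
        · exact absurd ((h _ h1 _ h2).1 (hp ▸ hT)) h'
        · rw [notMem_support_iff.1 h2]
      · rw [notMem_support_iff.1 h1]; simp
  · symm
    refine Finset.sum_eq_zero fun p hp => ?_
    rw [coeff_proj]
    replace hp := Finset.HasAntidiagonal.mem_antidiagonal.1 hp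
    split_ifs with h'
    · by_cases h1 : p.1 ∈ F.support
      · by_cases h2 : p.2 ∈ g.support
        · exact absurd (hp ▸ (h _ h1 _ h2).2 h') hT
        · rw [notMem_support_iff.1 h2]; simp
      · rw [notMem_support_iff.1 h1]; simp
    · simp
end Proj

section Facets
variable {n : ℕ}

theorem toR_add (a b : Fin n →₀ ℕ) : toR (a + b) = toR a + toR b := by
  ext i; simp [toR]

theorem toR_zero : toR (0 : Fin n →₀ ℕ) = 0 := by
  ext i; simp [toR]

theorem toR_nsmul (k : ℕ) (a : Fin n →₀ ℕ) : toR (k • a) = (k : ℝ) • toR a := by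
  ext i; simp [toR]

/-- The data attached to a facet of the Newton boundary. -/
structure Facet (f : MvPolynomial (Fin n) ℂ) where
  u : (Fin n → ℝ) →ₗ[ℝ] ℝ
  b : Module.Basis (Fin n) ℝ (Fin n → ℝ)
  β : Fin n → (Fin n →₀ ℕ)
  hb : ∀ k, b k = toR (β k)
  hu : ∀ k, u (b k) = 1
  mem : ∀ k, β k ∈ f.support
  le_one : ∀ m ∈ f.support, u (toR m) ≤ 1
  pos : ∀ m ∈ f.support, u (toR m) = 1 → ∀ k, 0 ≤ b.repr (toR m) k
  nd : ∀ T : Finset (Fin n), T.Nonempty → ¬ ∃ x : Fin n → ℂ, (∀ i, x i ≠ 0) ∧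
    ∀ i, ∑ m ∈ f.support, (if u (toR m) = 1 ∧ ∀ k ∉ T, b.repr (toR m) k = 0 then
      (m i : ℂ) * f.coeff m * ∏ j, x j ^ (m j) else 0) = 0

variable {f : MvPolynomial (Fin n) ℂ}
namespace Facet
variable (D : Facet f)

/-- Coordinates in the basis of vertices. -/
noncomputable def c (a : Fin n →₀ ℕ) (k : Fin n) : ℝ := D.b.repr (toR a) k

theorem c_add (a a' : Fin n →₀ ℕ) (k : Fin n) : D.c (a + a') k = D.c a k + D.c a' k := by
  simp [c, toR_add]

theorem c_nsmul (j : ℕ) (a : Fin n →₀ ℕ) (k : Fin n) : D.c (j • a) k = j * D.c a k := by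
  simp [c, toR_nsmul]

theorem c_zero (k : Fin n) : D.c 0 k = 0 := by simp [c, toR_zero]

theorem c_β (p k : Fin n) : D.c (D.β p) k = if p = k then 1 else 0 := by
  simp [c, ← D.hb, Finsupp.single_apply]

theorem toR_eq (x : Fin n → ℝ) (i : Fin n) : x i = ∑ k, D.b.repr x k * (D.β k i : ℝ) := by
  conv_lhs => rw [← D.b.sum_repr x]
  simp [D.hb, toR]

theorem c_toR (a : Fin n →₀ ℕ) (i : Fin n) : (a i : ℝ) = ∑ k, D.c a k * (D.β k i : ℝ) :=
  D.toR_eq (toR a) i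

theorem u_eq' (x : Fin n → ℝ) : D.u x = ∑ k, D.b.repr x k := by
  conv_lhs => rw [← D.b.sum_repr x]
  rw [map_sum]
  simp only [map_smul, D.hu, smul_eq_mul, mul_one]

theorem u_eq (a : Fin n →₀ ℕ) : D.u (toR a) = ∑ k, D.c a k := D.u_eq' _

theorem u_β (k : Fin n) : D.u (toR (D.β k)) = 1 := by rw [← D.hb, D.hu]

/-- Subtract a vertex inside the cone. -/
theorem exists_sub (a : Fin n →₀ ℕ) (p : Fin n) (h : ∀ k, 0 ≤ D.c a k) (hp : 1 ≤ D.c a p) :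
    ∃ a', a = a' + D.β p := by
  refine ⟨a - D.β p, ?_⟩
  ext i
  rw [Finsupp.add_apply, Finsupp.tsub_apply, Nat.sub_add_cancel]
  have h1 : (a i : ℝ) = ∑ k, D.c a k * (D.β k i : ℝ) := D.c_toR a i
  have h2 : D.c a p * (D.β p i : ℝ) ≤ ∑ k, D.c a k * (D.β k i : ℝ) :=
    Finset.single_le_sum (f := fun k => D.c a k * (D.β k i : ℝ))
      (fun k _ => mul_nonneg (h k) (Nat.cast_nonneg _)) (Finset.mem_univ p)
  have h3 : (D.β p i : ℝ) ≤ D.c a p * (D.β p i : ℝ) :=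
    le_mul_of_one_le_left (Nat.cast_nonneg _) hp
  exact_mod_cast (h3.trans h2).trans h1.symm.le

theorem finite_le (r : ℝ) : {a : Fin n →₀ ℕ | (∀ k, 0 ≤ D.c a k) ∧ D.u (toR a) ≤ r}.Finite := by
  refine Set.Finite.subset (Set.finite_Iic
    (Finsupp.equivFunOnFinite.symm fun i => ⌈∑ k, r * (D.β k i : ℝ)⌉₊)) ?_
  rintro a ⟨h1, h2⟩ i
  have : (a i : ℝ) ≤ ∑ k, r * (D.β k i : ℝ) := by
    rw [D.c_toR a i]
    refine Finset.sum_le_sum fun k _ => mul_le_mul_of_nonneg_right ?_ (Nat.cast_nonneg _)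
    refine le_trans ?_ h2
    rw [D.u_eq]
    exact Finset.single_le_sum (fun k _ => h1 k) (Finset.mem_univ k)
  exact_mod_cast this.trans (Nat.le_ceil _)

/-- The cone ring. -/
noncomputable def A : Subalgebra ℂ (MvPolynomial (Fin n) ℂ) where
  carrier := {g | ∀ a ∈ g.support, ∀ k, 0 ≤ D.c a k}
  add_mem' := by
    classical
    intro g h hg hh a ha
    rcases Finset.mem_union.mp (MvPolynomial.support_add ha) with h' | h'
    · exact hg a h'
    · exact hh a h'
  mul_mem' := by
    classical
    intro g h hg hh a ha k
    obtain ⟨a1, h1, a2, h2, rfl⟩ := Finset.mem_add.1 (MvPolynomial.support_mul _ _ ha)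
    rw [c_add]
    exact add_nonneg (hg a1 h1 k) (hh a2 h2 k)
  algebraMap_mem' := by
    intro r a ha k
    rw [MvPolynomial.algebraMap_eq, mem_support_iff, coeff_C] at ha
    rw [show a = 0 by by_contra h; exact ha (if_neg (Ne.symm h)), c_zero]

theorem mem_A {g : MvPolynomial (Fin n) ℂ} : g ∈ D.A ↔ ∀ a ∈ g.support, ∀ k, 0 ≤ D.c a k := Iff.rfl

/-- Condition of belonging to the half-open cone. -/
def S (σ : Set (Fin n)) (a : Fin n →₀ ℕ) : Prop := ∀ k, 0 ≤ D.c a k ∧ (k ∈ σ → 0 < D.c a k)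

/-- The half-open cone module. -/
noncomputable def M (σ : Set (Fin n)) : Submodule D.A (MvPolynomial (Fin n) ℂ) where
  carrier := {g | ∀ a ∈ g.support, D.S σ a}
  zero_mem' := by simp
  add_mem' := by
    classical
    intro g h hg hh a ha
    rcases Finset.mem_union.mp (MvPolynomial.support_add ha) with h' | h'
    · exact hg a h'
    · exact hh a h'
  smul_mem' := by
    classical
    rintro ⟨g, hg⟩ h hh a ha k
    obtain ⟨a1, h1, a2, h2, rfl⟩ := Finset.mem_add.1 (MvPolynomial.support_mul _ _ ha)
    rw [c_add]
    exact ⟨add_nonneg (hg a1 h1 k) (hh a2 h2 k).1,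
      fun hk => add_pos_of_nonneg_of_pos (hg a1 h1 k) ((hh a2 h2 k).2 hk)⟩

variable {σ : Set (Fin n)}
noncomputable instance instAddCommGroupM : AddCommGroup (D.M σ) := Submodule.addCommGroup _
noncomputable instance instModuleM : Module D.A (D.M σ) := Submodule.module _
noncomputable instance instSMulM : SMul D.A (D.M σ) := (instModuleM D).toSMul
noncomputable instance instDMAM : DistribMulAction D.A (D.M σ) := (instModuleM D).toDistribMulAction
noncomputable instance instSZM : SMulZeroClass D.A (D.M σ) :=
  (instDMAM D).toDistribSMul.toSMulZeroClass

theorem mem_M {g : MvPolynomial (Fin n) ℂ} : g ∈ D.M σ ↔ ∀ a ∈ g.support, D.S σ a := Iff.rfl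

theorem proj_mem_M (T : (Fin n →₀ ℕ) → Prop) {g : MvPolynomial (Fin n) ℂ} (h : g ∈ D.M σ) :
    proj T g ∈ D.M σ := fun a ha => h a ((mem_support_proj _ _ _).1 ha).1

theorem monomial_mem_M {a : Fin n →₀ ℕ} (r : ℂ) (h : D.S σ a) : monomial a r ∈ D.M σ := by
  intro a' ha'
  classical
  rw [support_monomial] at ha'
  split_ifs at ha' <;> simp at ha'
  rwa [ha']

noncomputable def x (k : Fin n) : D.A := ⟨monomial (D.β k) 1, by
  intro a ha j
  classical
  rw [support_monomial] at ha
  split_ifs at ha <;> simp at ha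
  rw [ha, c_β]; split_ifs <;> simp⟩

/-- The truncated combination of the `u_i ∂f/∂u_i` dual to the vertex `k`. -/
noncomputable def Fpoly (k : Fin n) : MvPolynomial (Fin n) ℂ :=
  proj (fun m => D.u (toR m) = 1) (∑ m ∈ f.support, monomial m ((D.c m k : ℂ) * f.coeff m))

theorem coeff_Fpoly (k : Fin n) (m : Fin n →₀ ℕ) [Decidable (D.u (toR m) = 1)] :
    (D.Fpoly k).coeff m = if D.u (toR m) = 1 then (D.c m k : ℂ) * f.coeff m else 0 := by
  classical
  rw [Fpoly, coeff_proj]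
  congr 1
  rw [coeff_sum]
  simp only [coeff_monomial]
  rw [Finset.sum_ite_eq']
  split_ifs with h
  · rfl
  · rw [notMem_support_iff.1 h]; simp

theorem support_Fpoly {k : Fin n} {m : Fin n →₀ ℕ} (h : m ∈ (D.Fpoly k).support) :
    m ∈ f.support ∧ D.u (toR m) = 1 := by
  classical
  rw [mem_support_iff, coeff_Fpoly] at h
  split_ifs at h with h'
  · exact ⟨mem_support_iff.2 (right_ne_zero_of_mul h), h'⟩
  · simp at h

noncomputable def F (k : Fin n) : D.A := ⟨D.Fpoly k, fun a ha =>
  D.pos a (D.support_Fpoly ha).1 (D.support_Fpoly ha).2⟩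

/-- projection on the half-open cone module, by degrees -/
noncomputable def pr (T : ℝ → Prop) (m : D.M σ) : D.M σ :=
  ⟨proj (fun a => T (D.u (toR a))) m, D.proj_mem_M _ m.2⟩

theorem pr_sub (T : ℝ → Prop) (m m' : D.M σ) : D.pr T (m - m') = D.pr T m - D.pr T m' :=
  Subtype.ext (proj_sub _ _ _)

theorem pr_smul (T : ℝ → Prop) (d : ℝ) (F : D.A)
    (hF : ∀ a ∈ (F : MvPolynomial (Fin n) ℂ).support, D.u (toR a) = d) (m : D.M σ) :
    D.pr T (F • m) = F • D.pr (fun r => T (r + d)) m := by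
  apply Subtype.ext
  change proj _ ((F : MvPolynomial (Fin n) ℂ) * m.1) = F.1 * proj _ m.1
  refine proj_mul _ _ _ _ fun a ha a' _ => ?_
  rw [toR_add, map_add, hF a ha, add_comm]

theorem u_x (k : Fin n) : ∀ a ∈ (D.x k : MvPolynomial (Fin n) ℂ).support, D.u (toR a) = 1 := by
  intro a ha
  classical
  change a ∈ (monomial (D.β k) 1).support at ha
  rw [support_monomial] at ha
  split_ifs at ha <;> simp at ha
  rw [ha, u_β]

theorem u_F (k : Fin n) : ∀ a ∈ (D.F k : MvPolynomial (Fin n) ℂ).support, D.u (toR a) = 1 :=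
  fun _ ha => (D.support_Fpoly ha).2

theorem x_pow (k : Fin n) (j : ℕ) :
    ((D.x k ^ j : D.A) : MvPolynomial (Fin n) ℂ) = monomial (j • D.β k) 1 := by
  rw [SubmonoidClass.coe_pow]
  change (monomial (D.β k) 1) ^ j = _
  rw [monomial_pow, one_pow]

theorem pr_mem_UU (T : ℝ → Prop) (P Q : Finset (Fin n)) (m : D.M σ)
    (hm : m ∈ UU (D.M σ) D.x D.F P Q) : D.pr T m ∈ UU (D.M σ) D.x D.F P Q := by
  induction Q using Finset.induction_on generalizing T m with
  | empty =>
    induction P using Finset.induction_on generalizing T m with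
    | empty =>
      have : m = 0 := by simpa [UU] using hm
      rw [this, show D.pr T (0 : D.M σ) = 0 from Subtype.ext (proj_zero fun a => T (D.u (toR a)))]
      exact Submodule.zero_mem _
    | insert q P hq ih =>
      rw [mem_UU_insert_left] at hm ⊢
      obtain ⟨m', h⟩ := hm
      have := ih T _ h
      rw [pr_sub, pr_smul D T 1 _ (D.u_x q)] at this
      exact ⟨_, this⟩
  | insert q P hq ih =>
    rw [mem_UU_insert_right] at hm ⊢
    obtain ⟨m', h⟩ := hm
    have := ih T _ h
    rw [pr_sub, pr_smul D T 1 _ (D.u_F q)] at this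
    exact ⟨_, this⟩

theorem hsep (P Q : Finset (Fin n)) (k : Fin n) (m : D.M σ)
    (h : ∀ j : ℕ, ∃ m' : D.M σ, m - D.x k ^ j • m' ∈ UU (D.M σ) D.x D.F P Q) :
    m ∈ UU (D.M σ) D.x D.F P Q := by
  obtain ⟨j, hj⟩ : ∃ j : ℕ, ∀ a ∈ (m : MvPolynomial (Fin n) ℂ).support, D.u (toR a) < j := by
    obtain ⟨j, hj⟩ := exists_nat_gt (∑ a ∈ (m : MvPolynomial (Fin n) ℂ).support, |D.u (toR a)|)
    refine ⟨j, fun a ha => lt_of_le_of_lt ?_ hj⟩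
    exact (le_abs_self _).trans (Finset.single_le_sum (f := fun a => |D.u (toR a)|)
      (fun a _ => abs_nonneg _) ha)
  obtain ⟨m', hm'⟩ := h j
  have := D.pr_mem_UU (fun r => r < j) P Q _ hm'
  rw [pr_sub, pr_smul D _ j] at this
  · have h1 : D.pr (fun r => r < j) m = m := Subtype.ext (proj_eq_self _ _ hj)
    have h2 : D.pr (fun r => r + j < (j : ℝ)) m' = 0 := by
      refine Subtype.ext (proj_eq_zero _ _ fun a ha => ?_)
      have := m'.2 a ha
      have h3 : 0 ≤ D.u (toR a) := by
        rw [D.u_eq]; exact Finset.sum_nonneg fun k _ => (this k).1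
      linarith
    rw [h1, h2] at this
    simpa using this
  · intro a ha
    classical
    rw [x_pow, support_monomial] at ha
    split_ifs at ha <;> simp at ha
    rw [ha, toR_nsmul, map_smul, u_β]; simp

theorem mem_UU_x (P : Finset (Fin n)) (m : D.M σ) :
    m ∈ UU (D.M σ) D.x D.F P ∅ ↔ ∀ a ∈ (m : MvPolynomial (Fin n) ℂ).support,
      ∃ p ∈ P, ∃ a', D.S σ a' ∧ a = a' + D.β p := by
  classical
  constructor
  · intro hm
    induction P using Finset.induction_on generalizing m with
    | empty =>
      have : m = 0 := by simpa [UU] using hm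
      simp [this]
    | insert q P hq ih =>
      rw [mem_UU_insert_left] at hm
      obtain ⟨m', h⟩ := hm
      intro a ha
      have hmm : (m : MvPolynomial (Fin n) ℂ) = monomial (D.β q) 1 * m'.1 + ((m - D.x q • m' : D.M σ) : MvPolynomial (Fin n) ℂ) := by
        change _ = _ + ((m : MvPolynomial (Fin n) ℂ) - monomial (D.β q) 1 * m'.1)
        ring
      rw [hmm] at ha
      rcases Finset.mem_union.mp (MvPolynomial.support_add ha) with h' | h'
      · obtain ⟨a1, h1, a2, h2, rfl⟩ := Finset.mem_add.1 (MvPolynomial.support_mul _ _ h')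
        have : a1 = D.β q := by
          rw [support_monomial] at h1
          split_ifs at h1 <;> simp at h1
          exact h1
        exact ⟨q, by simp, a2, m'.2 a2 h2, by rw [this, add_comm]⟩
      · obtain ⟨p, hp, r⟩ := ih _ h a h'
        exact ⟨p, by simp [hp], r⟩
  · intro h
    have hm : m = ∑ a ∈ (m : MvPolynomial (Fin n) ℂ).support.attach,
        (⟨monomial a.1 (coeff a.1 m.1), D.monomial_mem_M _ (m.2 a.1 a.2)⟩ : D.M σ) := by
      apply Subtype.ext
      rw [AddSubmonoidClass.coe_finsetSum]
      conv_lhs => rw [MvPolynomial.as_sum (m : MvPolynomial (Fin n) ℂ)]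
      rw [← Finset.sum_attach]
    rw [hm]
    refine Submodule.sum_mem _ fun a _ => ?_
    obtain ⟨p, hp, a', ha', e⟩ := h a.1 a.2
    convert smul_mem_UU' D.x D.F hp (⟨monomial a' (coeff a.1 m.1), D.monomial_mem_M _ ha'⟩ : D.M σ) using 1
    apply Subtype.ext
    change monomial a.1 (coeff a.1 m.1) = monomial (D.β p) 1 * monomial a' (coeff a.1 m.1)
    rw [monomial_mul, one_mul, add_comm, ← e]

theorem hx (P : Finset (Fin n)) (k : Fin n) (hk : k ∉ P) (m : D.M σ)
    (hm : D.x k • m ∈ UU (D.M σ) D.x D.F P ∅) : m ∈ UU (D.M σ) D.x D.F P ∅ := by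
  rw [mem_UU_x] at hm ⊢
  intro a ha
  have : a + D.β k ∈ ((D.x k • m : D.M σ) : MvPolynomial (Fin n) ℂ).support := by
    change _ ∈ (monomial (D.β k) 1 * (m : MvPolynomial (Fin n) ℂ)).support
    rw [mem_support_iff, add_comm, coeff_monomial_mul, one_mul]
    exact mem_support_iff.1 ha
  obtain ⟨p, hp, a', ha', e⟩ := hm _ this
  have hpk : p ≠ k := by rintro rfl; exact hk hp
  have hc : ∀ j, D.c a j + (if k = j then 1 else 0) = D.c a' j + (if p = j then 1 else 0) := by
    intro j
    rw [← c_β, ← c_add, e, c_add, c_β]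
  have hSa := m.2 a ha
  obtain ⟨a'', rfl⟩ := D.exists_sub a p (fun j => (hSa j).1) (by
    have := hc p
    have h2 := (ha' p).1
    simp [hpk.symm] at this
    linarith)
  refine ⟨p, hp, a'', ?_, rfl⟩
  intro j
  have h1 := hSa j
  have h2 := hc j
  have h3 := ha' j
  rw [c_add, c_β] at h1 h2
  by_cases hpj : p = j
  · have hkj : k ≠ j := by rintro rfl; exact hpk hpj
    simp only [hpj, hkj, if_true, if_false] at h1 h2
    have : D.c a'' j = D.c a' j := by linarith
    rw [this]; exact h3
  · simpa [hpj] using h1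

end Facet
end Facets
end ToricNewton

namespace ToricNewton

theorem nullst {A : Type*} [CommRing A] [Algebra ℂ A] [Algebra.FiniteType ℂ A] (J : Ideal A) (x : A)
    (hx : ∀ k : ℕ, x ^ k ∉ J) : ∃ χ : A →ₐ[ℂ] ℂ, (∀ y ∈ J, χ y = 0) ∧ χ x ≠ 0 := by
  have hj : IsJacobsonRing A := isJacobsonRing_of_finiteType (A := ℂ)
  have h1 : x ∉ J.radical := by rintro ⟨k, hk⟩; exact hx k hk
  rw [← hj.out J.radical_isRadical, Ideal.jacobson, Submodule.mem_sInf] at h1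
  push Not at h1
  obtain ⟨I, ⟨hJI, hI⟩, hxI⟩ := h1
  let : Field (A ⧸ I) := Ideal.Quotient.field I
  have : Algebra.FiniteType ℂ (A ⧸ I) := inferInstance
  have : Module.Finite ℂ (A ⧸ I) := finite_of_finite_type_of_isJacobsonRing ℂ (A ⧸ I)
  have hb : Function.Bijective (algebraMap ℂ (A ⧸ I)) :=
    IsAlgClosed.algebraMap_bijective_of_isIntegral
  let e : ℂ ≃ₐ[ℂ] (A ⧸ I) := AlgEquiv.ofBijective (Algebra.ofId ℂ (A ⧸ I)) hb
  refine ⟨(e.symm : (A ⧸ I) →ₐ[ℂ] ℂ).comp (Ideal.Quotient.mkₐ ℂ I), fun y hy => ?_, ?_⟩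
  · have : (Ideal.Quotient.mkₐ ℂ I) y = 0 := Ideal.Quotient.eq_zero_iff_mem.2 (hJI (J.le_radical hy))
    change e.symm (Ideal.Quotient.mkₐ ℂ I y) = 0
    rw [this, map_zero]
  · intro h
    have h' : e.symm (Ideal.Quotient.mkₐ ℂ I x) = 0 := h
    rw [map_eq_zero_iff _ e.symm.injective] at h'
    exact hxI (Ideal.Quotient.eq_zero_iff_mem.1 h')

theorem extend_char {C Z : Type*} [AddCommMonoid C] [AddCommGroup Z] (i : C →+ Z)
    (hi : Function.Injective i) (φ : C →+ Additive ℂˣ) : ∃ ψ : Z →+ Additive ℂˣ, ∀ a, ψ (i a) = φ a := by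
  have : DivisibleBy (Additive ℂˣ) ℤ := by
    have : DivisibleBy (Additive ℂˣ) ℕ := by
      apply divisibleByOfSMulRightSurj
      intro k hk a
      obtain ⟨z, hz⟩ := IsAlgClosed.exists_pow_nat_eq (a.toMul : ℂ) (Nat.pos_of_ne_zero hk)
      have hz0 : z ≠ 0 := by
        rintro rfl
        rw [zero_pow hk] at hz
        exact (a.toMul).ne_zero hz.symm
      exact ⟨Additive.ofMul (Units.mk0 z hz0), by
        apply Additive.toMul.injective; apply Units.ext; simpa using hz⟩
    exact AddGroup.divisibleByIntOfDivisibleByNat _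
  have hinj : Function.Injective (Algebra.GrothendieckAddGroup.lift i) := by
    rw [injective_iff_map_eq_zero]
    intro g h
    have h1 := (AddLocalization.addMonoidOf (⊤ : AddSubmonoid C)).sec_spec g
    rw [Algebra.GrothendieckAddGroup.lift_apply, sub_eq_zero] at h
    rw [hi h] at h1
    exact add_eq_right.1 h1
  obtain ⟨ψ, hψ⟩ := (Module.Baer.of_divisible (Additive ℂˣ)).extension_property_addMonoidHom
    _ hinj (Algebra.GrothendieckAddGroup.lift φ)
  refine ⟨ψ, fun a => ?_⟩
  have := DFunLike.congr_fun hψ (Algebra.GrothendieckAddGroup.of a)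
  rw [AddMonoidHom.comp_apply] at this
  have h1 := DFunLike.congr_fun (Algebra.GrothendieckAddGroup.lift.symm_apply_apply φ) a
  have h2 := DFunLike.congr_fun (Algebra.GrothendieckAddGroup.lift.symm_apply_apply i) a
  simp only [Algebra.GrothendieckAddGroup.lift_symm_apply, AddMonoidHom.comp_apply] at h1 h2
  rw [h1, h2] at this
  exact this
end ToricNewton

namespace ToricNewton
namespace Facet
variable {n : ℕ} {f : MvPolynomial (Fin n) ℂ} (D : Facet f)

theorem ext_c {a a' : Fin n →₀ ℕ} (h : ∀ k, D.c a k = D.c a' k) : a = a' := by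
  ext i
  have h1 := D.c_toR a i
  have h2 := D.c_toR a' i
  simp only [h] at h1
  exact_mod_cast h1.trans h2.symm

/-- Common denominator of the coordinates. -/
theorem exists_denom : ∃ N : ℕ, N ≠ 0 ∧ ∀ a : Fin n →₀ ℕ, (∀ k, 0 ≤ D.c a k) →
    ∃ d : Fin n → ℕ, (∀ k, N * D.c a k = d k) ∧ N • a = ∑ k, d k • D.β k := by
  classical
  let B : Matrix (Fin n) (Fin n) ℤ := Matrix.of fun i k => (D.β k i : ℤ)
  let BR : Matrix (Fin n) (Fin n) ℝ := B.map (Int.castRingHom ℝ)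
  have hdet : BR.det = ((B.det : ℤ) : ℝ) := by
    simpa [BR] using (RingHom.map_det (Int.castRingHom ℝ) B).symm
  have hmul : ∀ a : Fin n →₀ ℕ, BR.mulVec (D.c a) = toR a := by
    intro a
    ext i
    rw [show toR a i = (a i : ℝ) from rfl, D.c_toR a i]
    simp [Matrix.mulVec, dotProduct, BR, B, mul_comm]
  have hne : B.det ≠ 0 := by
    intro h0
    have h1 : BR.det = 0 := by rw [hdet, h0]; simp
    obtain ⟨w, hw, hw0⟩ := Matrix.exists_mulVec_eq_zero_iff.2 h1
    apply hw
    have h2 : ∑ k, w k • D.b k = 0 := by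
      ext i
      have := congrFun hw0 i
      simp only [D.hb]
      simpa [Matrix.mulVec, dotProduct, BR, B, mul_comm, toR] using this
    ext k
    exact Fintype.linearIndependent_iff.1 D.b.linearIndependent w h2 k
  refine ⟨B.det.natAbs, by simpa using hne, fun a ha => ?_⟩
  have key : ∀ k, ∃ z : ℤ, (B.det : ℝ) * D.c a k = z := by
    intro k
    refine ⟨B.adjugate.mulVec (fun i => (a i : ℤ)) k, ?_⟩
    have h1 : BR.adjugate.mulVec (toR a) = BR.det • D.c a := by
      rw [← hmul, Matrix.mulVec_mulVec, Matrix.adjugate_mul, Matrix.smul_mulVec, Matrix.one_mulVec]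
    have h2 := congrFun h1 k
    rw [Pi.smul_apply, smul_eq_mul, hdet] at h2
    rw [← h2]
    have h3 : BR.adjugate = B.adjugate.map (Int.castRingHom ℝ) := by
      simpa [BR] using (RingHom.map_adjugate (Int.castRingHom ℝ) B).symm
    rw [h3]
    simp [Matrix.mulVec, dotProduct, toR]
  have key2 : ∀ k, ∃ d : ℕ, (B.det.natAbs : ℝ) * D.c a k = d := by
    intro k
    obtain ⟨z, hz⟩ := key k
    refine ⟨z.natAbs, ?_⟩
    rw [Nat.cast_natAbs, Nat.cast_natAbs, Int.cast_abs, Int.cast_abs, ← hz, abs_mul,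
      abs_of_nonneg (ha k)]
  choose d hd using key2
  refine ⟨d, hd, D.ext_c fun k => ?_⟩
  rw [c_nsmul, hd]
  have : ∀ s : Finset (Fin n), D.c (∑ k ∈ s, d k • D.β k) k = ∑ j ∈ s, D.c (d j • D.β j) k := by
    intro s
    induction s using Finset.induction_on with
    | empty => simp [c_zero]
    | insert j s hj ih => rw [Finset.sum_insert hj, Finset.sum_insert hj, c_add, ih]
  rw [this]
  simp [c_nsmul, c_β]

theorem monomial_mem_A {a : Fin n →₀ ℕ} (r : ℂ) (h : ∀ k, 0 ≤ D.c a k) : monomial a r ∈ D.A := by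
  intro a' ha'
  classical
  rw [support_monomial] at ha'
  split_ifs at ha' <;> simp at ha'
  rwa [ha']

instance finiteType_A : Algebra.FiniteType ℂ D.A := by
  rw [← Subalgebra.fg_iff_finiteType]
  have hfin := D.finite_le n
  refine Subalgebra.fg_def.2 ⟨(fun a => monomial a (1 : ℂ)) '' _, hfin.image _, ?_⟩
  apply le_antisymm
  · rw [Algebra.adjoin_le_iff]
    rintro _ ⟨a, ha, rfl⟩
    exact D.monomial_mem_A 1 ha.1
  · have key : ∀ (N : ℕ) (a : Fin n →₀ ℕ), (∀ k, 0 ≤ D.c a k) → D.u (toR a) ≤ N →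
        monomial a (1 : ℂ) ∈ Algebra.adjoin ℂ ((fun a => monomial a (1 : ℂ)) ''
          {a : Fin n →₀ ℕ | (∀ k, 0 ≤ D.c a k) ∧ D.u (toR a) ≤ n}) := by
      intro N
      induction N with
      | zero =>
        intro a ha h
        exact Algebra.subset_adjoin ⟨a, ⟨ha, h.trans (by simp)⟩, rfl⟩
      | succ N ih =>
        intro a ha h
        by_cases hex : ∃ p, 1 ≤ D.c a p
        · obtain ⟨p, hp⟩ := hex
          obtain ⟨a', rfl⟩ := D.exists_sub a p ha hp
          have e : monomial (a' + D.β p) (1 : ℂ) = monomial a' 1 * monomial (D.β p) 1 := by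
            rw [monomial_mul, one_mul]
          rw [e]
          refine Subalgebra.mul_mem _ (ih a' ?_ ?_) (Algebra.subset_adjoin ⟨D.β p, ⟨?_, ?_⟩, rfl⟩)
          · intro k
            have h1 := ha k
            rw [c_add, c_β] at h1
            split_ifs at h1 with hk
            · subst hk; rw [c_add, c_β, if_pos rfl] at hp; linarith
            · simpa using h1
          · rw [toR_add, map_add, u_β] at h; push_cast at h; linarith
          · intro k; rw [c_β]; split_ifs <;> simp
          · rw [u_β]; exact_mod_cast Nat.succ_le_of_lt (Fin.pos p)
        · push Not at hex
          refine Algebra.subset_adjoin ⟨a, ⟨ha, ?_⟩, rfl⟩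
          rw [u_eq]
          calc ∑ k, D.c a k ≤ ∑ k : Fin n, (1 : ℝ) := Finset.sum_le_sum fun k _ => (hex k).le
            _ = n := by simp
    intro g hg
    rw [MvPolynomial.as_sum g]
    refine Subalgebra.sum_mem _ fun a ha => ?_
    have e : monomial a (coeff a g) = coeff a g • monomial a (1 : ℂ) := by simp [smul_monomial]
    rw [e]
    obtain ⟨N, hN⟩ := exists_nat_ge (D.u (toR a))
    exact Subalgebra.smul_mem _ (key N a (hg a ha) hN) _

open Classical in
/-- Values of a character on monomials. -/
noncomputable def chi (χ : D.A →ₐ[ℂ] ℂ) (a : Fin n →₀ ℕ) : ℂ :=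
  if h : ∀ k, 0 ≤ D.c a k then χ ⟨monomial a 1, D.monomial_mem_A 1 h⟩ else 0

theorem cone_add {a a' : Fin n →₀ ℕ} (h : ∀ k, 0 ≤ D.c a k) (h' : ∀ k, 0 ≤ D.c a' k) :
    ∀ k, 0 ≤ D.c (a + a') k := fun k => by rw [c_add]; exact add_nonneg (h k) (h' k)

theorem chi_add (χ : D.A →ₐ[ℂ] ℂ) {a a' : Fin n →₀ ℕ} (h : ∀ k, 0 ≤ D.c a k)
    (h' : ∀ k, 0 ≤ D.c a' k) : D.chi χ (a + a') = D.chi χ a * D.chi χ a' := by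
  rw [chi, chi, chi, dif_pos h, dif_pos h', dif_pos (D.cone_add h h'), ← map_mul]
  congr 1
  apply Subtype.ext
  change monomial (a + a') 1 = monomial a 1 * monomial a' 1
  rw [monomial_mul, one_mul]

theorem chi_zero (χ : D.A →ₐ[ℂ] ℂ) : D.chi χ 0 = 1 := by
  rw [chi, dif_pos (fun k => (D.c_zero k).ge)]
  exact map_one χ

theorem cone_nsmul {a : Fin n →₀ ℕ} (h : ∀ k, 0 ≤ D.c a k) (j : ℕ) :
    ∀ k, 0 ≤ D.c (j • a) k := fun k => by
  rw [c_nsmul]; exact mul_nonneg (Nat.cast_nonneg _) (h k)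

theorem cone_β (p : Fin n) : ∀ k, 0 ≤ D.c (D.β p) k := fun k => by rw [c_β]; split_ifs <;> simp

theorem chi_nsmul (χ : D.A →ₐ[ℂ] ℂ) {a : Fin n →₀ ℕ} (h : ∀ k, 0 ≤ D.c a k) (j : ℕ) :
    D.chi χ (j • a) = D.chi χ a ^ j := by
  induction j with
  | zero => rw [zero_smul, chi_zero, pow_zero]
  | succ j ih => rw [succ_nsmul, D.chi_add χ (D.cone_nsmul h j) h, ih, pow_succ]

theorem chi_sum (χ : D.A →ₐ[ℂ] ℂ) (d : Fin n → ℕ) (s : Finset (Fin n)) :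
    (∀ k, 0 ≤ D.c (∑ p ∈ s, d p • D.β p) k) ∧
    D.chi χ (∑ p ∈ s, d p • D.β p) = ∏ p ∈ s, D.chi χ (D.β p) ^ d p := by
  induction s using Finset.induction_on with
  | empty => simp [chi_zero, c_zero]
  | insert j s hj ih =>
    rw [Finset.sum_insert hj, Finset.prod_insert hj]
    refine ⟨D.cone_add (D.cone_nsmul (D.cone_β j) _) ih.1, ?_⟩
    rw [D.chi_add χ (D.cone_nsmul (D.cone_β j) _) ih.1, D.chi_nsmul χ (D.cone_β j), ih.2]

theorem chi_ne_zero (χ : D.A →ₐ[ℂ] ℂ) {a : Fin n →₀ ℕ} (h : ∀ k, 0 ≤ D.c a k) :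
    D.chi χ a ≠ 0 ↔ ∀ k, D.chi χ (D.β k) = 0 → D.c a k = 0 := by
  obtain ⟨N, hN, hd⟩ := D.exists_denom
  obtain ⟨d, hd1, hd2⟩ := hd a h
  have e : D.chi χ a ^ N = ∏ p, D.chi χ (D.β p) ^ d p := by
    rw [← D.chi_nsmul χ h, hd2, (D.chi_sum χ d Finset.univ).2]
  rw [← pow_ne_zero_iff hN, e, Finset.prod_ne_zero_iff]
  have hN' : (N : ℝ) ≠ 0 := by exact_mod_cast hN
  refine forall_congr' fun k => ?_
  have h1 := hd1 k
  by_cases h0 : D.chi χ (D.β k) = 0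
  · simp only [Finset.mem_univ, h0, forall_true_left]
    by_cases hdk : d k = 0
    · simp only [hdk, Nat.cast_zero, mul_eq_zero, hN', false_or] at h1
      simp [hdk, h1]
    · have : D.c a k ≠ 0 := by
        rintro h2; rw [h2, mul_zero] at h1; exact hdk (by exact_mod_cast h1.symm)
      simp [hdk, this]
  · simp [h0]

theorem chi_apply (χ : D.A →ₐ[ℂ] ℂ) (g : D.A) :
    χ g = ∑ a ∈ g.1.support, coeff a g.1 * D.chi χ a := by
  have e : g = ∑ a ∈ g.1.support.attach,
      coeff a.1 g.1 • (⟨monomial a.1 1, D.monomial_mem_A 1 (g.2 a.1 a.2)⟩ : D.A) := by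
    apply Subtype.ext
    rw [AddSubmonoidClass.coe_finsetSum]
    conv_lhs => rw [MvPolynomial.as_sum g.1]
    rw [← Finset.sum_attach]
    refine Finset.sum_congr rfl fun a _ => ?_
    simp [smul_monomial]
  conv_lhs => rw [e]
  rw [map_sum, ← Finset.sum_attach g.1.support]
  refine Finset.sum_congr rfl fun a _ => ?_
  rw [map_smul, smul_eq_mul, chi, dif_pos (g.2 a.1 a.2)]

theorem chi_F (χ : D.A →ₐ[ℂ] ℂ) (k : Fin n) [DecidablePred fun m : Fin n →₀ ℕ => D.u (toR m) = 1] :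
    χ (D.F k) = ∑ m ∈ f.support, if D.u (toR m) = 1 then (D.c m k : ℂ) * coeff m f * D.chi χ m else 0 := by
  rw [chi_apply]
  change ∑ a ∈ (D.Fpoly k).support, coeff a (D.Fpoly k) * D.chi χ a = _
  rw [Finset.sum_subset (s₂ := f.support) (fun m hm => (D.support_Fpoly hm).1)]
  · refine Finset.sum_congr rfl fun m _ => ?_
    rw [coeff_Fpoly]; split_ifs <;> simp
  · intro m _ hm
    rw [notMem_support_iff.1 hm, zero_mul]

/-- A character of the face semigroup extends to a point of the torus. -/
theorem exists_point (χ : D.A →ₐ[ℂ] ℂ) : ∃ x : Fin n → ℂ, (∀ i, x i ≠ 0) ∧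
    ∀ a : Fin n →₀ ℕ, (∀ k, 0 ≤ D.c a k) → D.chi χ a ≠ 0 → ∏ j, x j ^ (a j) = D.chi χ a := by
  let C : AddSubmonoid (Fin n →₀ ℕ) :=
    { carrier := {a | (∀ k, 0 ≤ D.c a k) ∧ D.chi χ a ≠ 0}
      zero_mem' := ⟨fun k => (D.c_zero k).ge, by rw [chi_zero]; exact one_ne_zero⟩
      add_mem' := fun {a a'} h h' => ⟨D.cone_add h.1 h'.1, by
        rw [D.chi_add χ h.1 h'.1]; exact mul_ne_zero h.2 h'.2⟩ }
  let i : C →+ (Fin n → ℤ) :=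
    { toFun := fun a j => (a.1 j : ℤ)
      map_zero' := by ext; simp
      map_add' := by intro a b; ext; simp }
  have hi : Function.Injective i := by
    intro a b h
    apply Subtype.ext
    ext j
    have : (a.1 j : ℤ) = b.1 j := congrFun h j
    exact_mod_cast this
  let φ : C →+ Additive ℂˣ :=
    { toFun := fun a => Additive.ofMul (Units.mk0 (D.chi χ a.1) a.2.2)
      map_zero' := by
        apply Additive.toMul.injective; apply Units.ext
        exact D.chi_zero χ
      map_add' := by
        intro a b
        apply Additive.toMul.injective; apply Units.ext
        exact D.chi_add χ a.2.1 b.2.1 }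
  obtain ⟨ψ, hψ⟩ := extend_char i hi φ
  refine ⟨fun j => ((ψ (Pi.single j 1)).toMul : ℂˣ), fun j => Units.ne_zero _, fun a h1 h2 => ?_⟩
  have h3 := hψ ⟨a, h1, h2⟩
  have h4 : i ⟨a, h1, h2⟩ = ∑ j, (a j) • (Pi.single j (1 : ℤ) : Fin n → ℤ) := by
    ext k
    change (a k : ℤ) = _
    simp [Finset.sum_apply, Pi.single_apply]
  rw [h4, map_sum] at h3
  have h5 := congrArg (fun z : Additive ℂˣ => ((z.toMul : ℂˣ) : ℂ)) h3
  simp only [map_nsmul, toMul_sum, toMul_nsmul, Units.coe_prod, Units.val_pow_eq_pow_val] at h5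
  exact h5

theorem hrad (P Q : Finset (Fin n)) (c : Fin n)
    (hall : ∀ i, i ∈ P ∨ i ∈ Q ∨ i = c) :
    ∃ k : ℕ, D.x c ^ k ∈ Ideal.span (insert (D.F c) (D.x '' P ∪ D.F '' Q)) := by
  classical
  by_contra hcon
  push Not at hcon
  obtain ⟨χ, h1, h2⟩ := nullst _ _ hcon
  have hxβ : ∀ k, χ (D.x k) = D.chi χ (D.β k) := fun k => by
    rw [chi, dif_pos (D.cone_β k)]; rfl
  have hP : ∀ k ∈ P, D.chi χ (D.β k) = 0 := fun k hk => by
    rw [← hxβ]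
    exact h1 _ (Ideal.subset_span (Or.inr (Or.inl ⟨k, hk, rfl⟩)))
  obtain ⟨x, hx0, hx⟩ := D.exists_point χ
  refine D.nd (Finset.univ.filter fun k => D.chi χ (D.β k) ≠ 0) ⟨c, by simpa [← hxβ] using h2⟩
    ⟨x, hx0, fun i => ?_⟩
  have hF : ∀ k, χ (D.F k) = 0 := by
    intro k
    rcases hall k with hk | hk | rfl
    · rw [chi_F]
      refine Finset.sum_eq_zero fun m hm => ?_
      split_ifs with hu
      · have h3 := D.chi_ne_zero χ (a := m) (D.pos m hm hu)
        by_cases h4 : D.chi χ m = 0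
        · rw [h4, mul_zero]
        · rw [h3.1 h4 k (hP k hk)]; simp
      · rfl
    · exact h1 _ (Ideal.subset_span (Or.inr (Or.inr ⟨k, hk, rfl⟩)))
    · exact h1 _ (Ideal.subset_span (Or.inl rfl))
  have e : ∑ k, (D.β k i : ℂ) * χ (D.F k) = 0 := by simp [hF]
  refine Eq.trans ?_ e
  simp only [chi_F, Finset.mul_sum]
  rw [Finset.sum_comm]
  refine Finset.sum_congr rfl fun m hm => ?_
  by_cases hu : D.u (toR m) = 1
  · simp only [hu, true_and, if_true]
    have hpos := D.pos m hm hu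
    have h3 := D.chi_ne_zero χ (a := m) hpos
    have h4 : ∑ k, (D.β k i : ℂ) * ((D.c m k : ℂ) * coeff m f * D.chi χ m) =
        (m i : ℂ) * coeff m f * D.chi χ m := by
      have h5 : (m i : ℂ) = ∑ k, (D.c m k : ℂ) * (D.β k i : ℂ) := by
        have := congrArg (fun r : ℝ => (r : ℂ)) (D.c_toR m i)
        push_cast at this
        exact this
      rw [h5, Finset.sum_mul, Finset.sum_mul]
      refine Finset.sum_congr rfl fun k _ => by ring
    rw [h4]
    split_ifs with hc
    · rw [hx m hpos (h3.2 fun k hk => hc k (by simpa using hk))]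
    · by_cases h6 : D.chi χ m = 0
      · rw [h6, mul_zero]
      · exfalso
        apply hc
        intro k hk
        exact h3.1 h6 k (by simpa using hk)
  · simp [hu]

variable {σ : Set (Fin n)}

theorem inj (P Q : Finset (Fin n)) (c : Fin n) (hPQ : Disjoint P Q) (hP : c ∉ P) (hQ : c ∉ Q)
    (m : D.M σ) :
    (D.x c • m ∈ UU (D.M σ) D.x D.F P Q → m ∈ UU (D.M σ) D.x D.F P Q) ∧
      (D.F c • m ∈ UU (D.M σ) D.x D.F P Q → m ∈ UU (D.M σ) D.x D.F P Q) :=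
  master D.x D.F (fun P Q c m h => D.hsep P Q c m h) (fun P c hc m h => D.hx P c hc m h)
    (fun P Q c _ _ _ h => D.hrad P Q c h) Q P c hPQ hP hQ m

end Facet
end ToricNewton

namespace ToricNewton
namespace Facet
variable {n : ℕ} {f : MvPolynomial (Fin n) ℂ} (D : Facet f) {σ : Set (Fin n)}

/-- Homogeneous part of the half-open cone module. -/
noncomputable def V (σ : Set (Fin n)) (d : ℝ) : Submodule ℂ (MvPolynomial (Fin n) ℂ) where
  carrier := {g | g ∈ D.M σ ∧ ∀ a ∈ g.support, D.u (toR a) = d}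
  zero_mem' := ⟨Submodule.zero_mem _, by simp⟩
  add_mem' := by
    rintro a b ⟨h1, h2⟩ ⟨h3, h4⟩
    refine ⟨Submodule.add_mem _ h1 h3, fun m hm => ?_⟩
    classical
    rcases Finset.mem_union.mp (MvPolynomial.support_add hm) with h | h
    · exact h2 m h
    · exact h4 m h
  smul_mem' := by
    rintro r a ⟨h1, h2⟩
    exact ⟨fun m hm => h1 m (MvPolynomial.support_smul hm),
      fun m hm => h2 m (MvPolynomial.support_smul hm)⟩

instance finV (d : ℝ) : FiniteDimensional ℂ (D.V σ d) := by
  have hfin := D.finite_le d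
  have h : D.V σ d ≤ Submodule.span ℂ ((fun a => monomial a (1 : ℂ)) ''
      {a : Fin n →₀ ℕ | (∀ k, 0 ≤ D.c a k) ∧ D.u (toR a) ≤ d}) := by
    intro g hg
    rw [MvPolynomial.as_sum g]
    refine Submodule.sum_mem _ fun a ha => ?_
    have e : monomial a (coeff a g) = coeff a g • monomial a (1 : ℂ) := by simp [smul_monomial]
    rw [e]
    exact Submodule.smul_mem _ _ (Submodule.subset_span ⟨a,
      (⟨fun k => (hg.1 a ha k).1, (hg.2 a ha).le⟩ : a ∈
        {a : Fin n →₀ ℕ | (∀ k, 0 ≤ D.c a k) ∧ D.u (toR a) ≤ d}), rfl⟩)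
  have := FiniteDimensional.span_of_finite ℂ (hfin.image (fun a => monomial a (1 : ℂ)))
  exact Submodule.finiteDimensional_of_le h

/-- Elements of the module. -/
def toM {d : ℝ} (y : D.V σ d) : D.M σ := ⟨y.1, y.2.1⟩

theorem smulC_mem (W : Submodule D.A (D.M σ)) (r : ℂ) (m m' : D.M σ) (h : m ∈ W)
    (e : m'.1 = r • m.1) : m' ∈ W := by
  have : m' = (algebraMap ℂ D.A r) • m := by
    apply Subtype.ext
    rw [e]
    change r • m.1 = (algebraMap ℂ (MvPolynomial (Fin n) ℂ) r) * m.1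
    rw [Algebra.smul_def]
  rw [this]
  exact W.smul_mem _ h

/-- The trace of the submodule `UU` on a homogeneous part. -/
noncomputable def V0 (σ : Set (Fin n)) (d : ℝ) (P Q : Finset (Fin n)) : Submodule ℂ (D.V σ d) where
  carrier := {y | D.toM y ∈ UU (D.M σ) D.x D.F P Q}
  zero_mem' := Submodule.zero_mem (UU (D.M σ) D.x D.F P Q)
  add_mem' := fun {a b} ha hb => Submodule.add_mem (UU (D.M σ) D.x D.F P Q) ha hb
  smul_mem' := fun r a ha =>
    D.smulC_mem (UU (D.M σ) D.x D.F P Q) r (D.toM a) (D.toM (r • a)) ha rfl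

theorem mem_V0 {d : ℝ} {P Q : Finset (Fin n)} {y : D.V σ d} :
    y ∈ D.V0 σ d P Q ↔ D.toM y ∈ UU (D.M σ) D.x D.F P Q := Iff.rfl

/-- Multiplication by an element homogeneous of degree one. -/
noncomputable def mulV (σ : Set (Fin n)) (d : ℝ) (F : D.A)
    (hF : ∀ a ∈ F.1.support, D.u (toR a) = 1) : D.V σ (d - 1) →ₗ[ℂ] D.V σ d where
  toFun y := ⟨F.1 * y.1, (D.M σ).smul_mem F y.2.1, by
    classical
    intro a ha
    obtain ⟨a1, h1, a2, h2, rfl⟩ := Finset.mem_add.1 (MvPolynomial.support_mul _ _ ha)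
    rw [toR_add, map_add, hF a1 h1, y.2.2 a2 h2]; ring⟩
  map_add' y z := Subtype.ext (mul_add _ _ _)
  map_smul' r y := Subtype.ext (by simp)

theorem toM_mulV (d : ℝ) (F : D.A) (hF : ∀ a ∈ F.1.support, D.u (toR a) = 1)
    (y : D.V σ (d - 1)) : D.toM (D.mulV σ d F hF y) = F • D.toM y := Subtype.ext rfl

theorem toM_sub {d : ℝ} (y z : D.V σ d) : D.toM (y - z) = D.toM y - D.toM z := Subtype.ext rfl

theorem nonvanish (α : ℝ) (w : Fin n →₀ ℕ) (hw : D.S σ w) (hα : D.u (toR w) = α)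
    (hno : ∀ p a', D.S σ a' → w ≠ a' + D.β p) :
    ∃ g : D.M σ, (∀ a ∈ g.1.support, D.u (toR a) = α) ∧
      g ∉ UU (D.M σ) D.x D.F ∅ Finset.univ := by
  classical
  by_contra hcon
  push Not at hcon
  have key : ∀ P : Finset (Fin n), ∀ g : D.M σ, (∀ a ∈ g.1.support, D.u (toR a) = α) →
      g ∈ UU (D.M σ) D.x D.F P (Finset.univ \ P) := by
    intro P
    induction P using Finset.induction_on with
    | empty => simpa using hcon
    | insert c P hc ih =>
      intro g hg
      set Q := Finset.univ \ insert c P with hQ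
      have e : Finset.univ \ P = insert c Q := by
        ext k; by_cases hk : k = c <;> simp [hQ, hk, hc]
      rw [e] at ih
      have hPQ : Disjoint P Q := by
        rw [Finset.disjoint_left]; intro k hk; simp [hQ, hk]
      have hcQ : c ∉ Q := by simp [hQ]
      have := linalg (D.V0 σ (α - 1) P Q) (D.V0 σ α P Q) (D.mulV σ α (D.F c) (D.u_F c))
        (D.mulV σ α (D.x c) (D.u_x c))
        (fun y => by
          rw [mem_V0, mem_V0, toM_mulV]
          exact ⟨fun h => (D.inj P Q c hPQ hc hcQ (D.toM y)).2 h,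
            fun h => Submodule.smul_mem _ (D.F c) h⟩)
        (fun y => by
          rw [mem_V0, mem_V0, toM_mulV]
          exact ⟨fun h => (D.inj P Q c hPQ hc hcQ (D.toM y)).1 h,
            fun h => Submodule.smul_mem _ (D.x c) h⟩)
        (by
          intro y
          obtain ⟨m', hm'⟩ := (mem_UU_insert_right _ _ _ _ _ _).1 (ih (D.toM y) y.2.2)
          have h1 := D.pr_mem_UU (fun r => r = α) P Q _ hm'
          rw [pr_sub, pr_smul D _ 1 _ (D.u_F c)] at h1
          have h2 : D.pr (fun r => r = α) (D.toM y) = D.toM y :=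
            Subtype.ext (proj_eq_self _ _ y.2.2)
          rw [h2] at h1
          refine ⟨⟨(D.pr (fun r => r + 1 = α) m').1, (D.pr (fun r => r + 1 = α) m').2, ?_⟩, by
            rw [mem_V0, toM_sub, toM_mulV]; exact h1⟩
          intro a ha
          have := ((mem_support_proj _ _ _).1 ha).2
          linarith)
      obtain ⟨y, hy⟩ := this ⟨g.1, g.2, hg⟩
      rw [mem_V0, toM_sub, toM_mulV] at hy
      exact (mem_UU_insert_left _ _ _ _ _ _).2 ⟨D.toM y, hy⟩
  have h1 := key Finset.univ ⟨monomial w 1, D.monomial_mem_M 1 hw⟩ (by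
    intro a ha
    rw [support_monomial] at ha
    split_ifs at ha <;> simp at ha
    rw [ha, hα])
  rw [sdiff_self, Finset.bot_eq_empty, mem_UU_x] at h1
  obtain ⟨p, -, a', ha', e⟩ := h1 w (by simp [support_monomial])
  exact hno p a' ha' e

theorem koszul' (g : Fin n → D.M σ) (hg : ∑ i, D.F i • g i = 0) :
    ∃ k : Fin n → Fin n → D.M σ, (∀ i j, k i j = - k j i) ∧ ∀ i, g i = ∑ j, D.F j • k i j := by
  obtain ⟨k, h1, h2⟩ := koszul D.x D.F (fun Q c hc m h =>
    (D.inj ∅ Q c (Finset.disjoint_empty_left _) (Finset.notMem_empty _) hc m).2 h) Finset.univ g hg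
  exact ⟨k, h1, fun i => h2 i (Finset.mem_univ i)⟩

end Facet
end ToricNewton

namespace ToricNewton
section Log
variable {n : ℕ} {f : MvPolynomial (Fin n) ℂ}

theorem coeff_log (f : MvPolynomial (Fin n) ℂ) (j : Fin n) (m : Fin n →₀ ℕ) :
    coeff m (X j * pderiv j f) = (m j : ℂ) * coeff m f := by
  classical
  induction f using MvPolynomial.induction_on' with
  | monomial a r =>
    rw [pderiv_monomial, X, monomial_mul, one_mul, coeff_monomial, coeff_monomial]
    by_cases ha : a j = 0
    · by_cases hm : a = m
      · subst hm; simp [ha]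
      · simp [ha, hm]
    · have e : Finsupp.single j 1 + (a - Finsupp.single j 1) = a := by
        ext i
        by_cases hi : j = i
        · subst hi; simp; omega
        · simp [Finsupp.single_apply, hi]
      rw [e]
      split_ifs with hm
      · subst hm; ring
      · simp
  | add p q hp hq => rw [map_add, mul_add, coeff_add, coeff_add, hp, hq, mul_add]

end Log

namespace Facet
variable {n : ℕ} {f : MvPolynomial (Fin n) ℂ} (D : Facet f) {σ : Set (Fin n)}

/-- Truncated logarithmic derivative. -/
noncomputable def G (j : Fin n) : MvPolynomial (Fin n) ℂ :=
  proj (fun m => D.u (toR m) = 1) (X j * pderiv j f)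

open Classical in
theorem coeff_G (j : Fin n) (m : Fin n →₀ ℕ) :
    coeff m (D.G j) = if D.u (toR m) = 1 then (m j : ℂ) * coeff m f else 0 := by
  rw [G, coeff_proj, coeff_log]

theorem G_eq (j : Fin n) : D.G j = ∑ k, C (D.β k j : ℂ) * (D.F k).1 := by
  classical
  ext m
  rw [coeff_G, coeff_sum]
  simp only [coeff_C_mul]
  change _ = ∑ k, (D.β k j : ℂ) * coeff m (D.Fpoly k)
  simp only [coeff_Fpoly]
  split_ifs
  · have h5 : (m j : ℂ) = ∑ k, (D.c m k : ℂ) * (D.β k j : ℂ) := by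
      have := congrArg (fun r : ℝ => (r : ℂ)) (D.c_toR m j)
      push_cast at this
      exact this
    rw [h5, Finset.sum_mul]
    exact Finset.sum_congr rfl fun k _ => by ring
  · simp

/-- Coordinates of the standard basis. -/
noncomputable def R (k j : Fin n) : ℝ := D.b.repr (Pi.single j 1) k

theorem c_eq_R (m : Fin n →₀ ℕ) (k : Fin n) : D.c m k = ∑ j, D.R k j * (m j : ℝ) := by
  have h : toR m = ∑ j, (m j : ℝ) • (Pi.single j 1 : Fin n → ℝ) := by
    ext i; simp [toR, Finset.sum_apply, Pi.single_apply]
  rw [c, h, map_sum, Finsupp.finsetSum_apply]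
  refine Finset.sum_congr rfl fun j _ => ?_
  rw [map_smul, Finsupp.smul_apply, smul_eq_mul, mul_comm]; rfl

theorem F_eq (k : Fin n) : (D.F k).1 = ∑ j, C (D.R k j : ℂ) * D.G j := by
  classical
  ext m
  rw [coeff_sum]
  simp only [coeff_C_mul]
  change coeff m (D.Fpoly k) = _
  simp only [coeff_Fpoly, coeff_G]
  split_ifs
  · rw [c_eq_R]; push_cast
    rw [Finset.sum_mul]
    exact Finset.sum_congr rfl fun k _ => by ring
  · simp

theorem R_β (j j' : Fin n) : ∑ k, D.R k j * (D.β k j' : ℝ) = if j' = j then 1 else 0 := by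
  have := D.toR_eq (Pi.single j 1) j'
  rw [Pi.single_apply] at this
  rw [this]; rfl

theorem support_G {j : Fin n} {m : Fin n →₀ ℕ} (h : m ∈ (D.G j).support) :
    m ∈ f.support ∧ D.u (toR m) = 1 := by
  classical
  rw [mem_support_iff, coeff_G] at h
  split_ifs at h with h'
  · exact ⟨mem_support_iff.2 (right_ne_zero_of_mul h), h'⟩
  · simp at h

theorem C_mul_mem_M (r : ℂ) {g : MvPolynomial (Fin n) ℂ} (h : g ∈ D.M σ) : C r * g ∈ D.M σ := by
  intro a ha
  apply h
  rw [mem_support_iff, coeff_C_mul] at ha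
  exact mem_support_iff.2 (right_ne_zero_of_mul ha)

theorem koszulG (γ : ℝ) (h : Fin n → MvPolynomial (Fin n) ℂ) (hM : ∀ j, h j ∈ D.M σ)
    (hd : ∀ j, ∀ a ∈ (h j).support, D.u (toR a) = γ) (hz : ∑ j, D.G j * h j = 0) :
    ∃ K : Fin n → Fin n → MvPolynomial (Fin n) ℂ, (∀ i j, K i j = - K j i) ∧
      (∀ i j, K i j ∈ D.M σ) ∧ (∀ i j, ∀ a ∈ (K i j).support, D.u (toR a) = γ - 1) ∧
      ∀ i, h i = ∑ j, D.G j * K i j := by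
  classical
  let g : Fin n → D.M σ := fun k => ⟨∑ j, C (D.β k j : ℂ) * h j,
    Submodule.sum_mem _ fun j _ => D.C_mul_mem_M _ (hM j)⟩
  have hg : ∑ k, D.F k • g k = 0 := by
    apply Subtype.ext
    rw [AddSubmonoidClass.coe_finsetSum]
    change ∑ k, (D.F k).1 * (∑ j, C (D.β k j : ℂ) * h j) = 0
    rw [← hz]
    simp only [Finset.mul_sum]
    rw [Finset.sum_comm]
    refine Finset.sum_congr rfl fun j _ => ?_
    rw [G_eq, Finset.sum_mul]
    exact Finset.sum_congr rfl fun k _ => by ring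
  obtain ⟨κ, h1, h2⟩ := D.koszul' g hg
  have h2' : ∀ k, ∑ j, C (D.β k j : ℂ) * h j = ∑ p, (D.F p).1 * (κ k p).1 := by
    intro k
    have := congrArg Subtype.val (h2 k)
    rw [AddSubmonoidClass.coe_finsetSum] at this
    exact this
  let K0 : Fin n → Fin n → MvPolynomial (Fin n) ℂ := fun j l =>
    ∑ k, ∑ p, C (D.R k j : ℂ) * (C (D.R p l : ℂ) * (κ k p).1)
  have hK0 : ∀ i, h i = ∑ l, D.G l * K0 i l := by
    intro i
    have e1 : ∑ l, D.G l * K0 i l = ∑ k, C (D.R k i : ℂ) * ∑ p, (D.F p).1 * (κ k p).1 := by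
      simp only [K0, Finset.mul_sum]
      rw [Finset.sum_comm]
      refine Finset.sum_congr rfl fun k _ => ?_
      rw [Finset.sum_comm]
      refine Finset.sum_congr rfl fun p _ => ?_
      rw [F_eq, Finset.sum_mul, Finset.mul_sum]
      exact Finset.sum_congr rfl fun l _ => by ring
    rw [e1]
    simp only [← h2', Finset.mul_sum]
    rw [Finset.sum_comm]
    have e2 : ∀ j, ∑ k, C (D.R k i : ℂ) * (C (D.β k j : ℂ) * h j) = if j = i then h j else 0 := by
      intro j
      have : (∑ k, (D.R k i : ℂ) * (D.β k j : ℂ)) = if j = i then 1 else 0 := by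
        have := congrArg (fun r : ℝ => (r : ℂ)) (D.R_β i j)
        push_cast at this
        rw [this]; split_ifs <;> simp
      calc _ = C (∑ k, (D.R k i : ℂ) * (D.β k j : ℂ)) * h j := by
            rw [map_sum, Finset.sum_mul]
            exact Finset.sum_congr rfl fun k _ => by rw [map_mul]; ring
        _ = _ := by rw [this]; split_ifs <;> simp
    simp only [e2]
    simp
  have hK0a : ∀ i j, K0 i j = - K0 j i := by
    intro i j
    simp only [K0]
    rw [← Finset.sum_neg_distrib, Finset.sum_comm]
    refine Finset.sum_congr rfl fun k _ => ?_
    rw [← Finset.sum_neg_distrib]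
    refine Finset.sum_congr rfl fun p _ => ?_
    have : (κ p k).1 = - (κ k p).1 := congrArg Subtype.val (h1 p k)
    rw [this]; ring
  have hK0M : ∀ i j, K0 i j ∈ D.M σ := fun i j =>
    Submodule.sum_mem _ fun k _ => Submodule.sum_mem _ fun p _ =>
      D.C_mul_mem_M _ (D.C_mul_mem_M _ (κ k p).2)
  refine ⟨fun i j => proj (fun a => D.u (toR a) = γ - 1) (K0 i j), ?_, ?_, ?_, ?_⟩
  · intro i j
    simp only []
    rw [hK0a, proj_neg]
  · intro i j
    exact D.proj_mem_M _ (hK0M i j)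
  · intro i j a ha
    exact ((mem_support_proj _ _ _).1 ha).2
  · intro i
    conv_lhs => rw [← proj_eq_self (fun a => D.u (toR a) = γ) (h i) (hd i), hK0 i]
    rw [proj_sum]
    refine Finset.sum_congr rfl fun l _ => proj_mul _ _ _ _ fun m hm a _ => ?_
    rw [toR_add, map_add, (D.support_G hm).2]
    constructor <;> intro h <;> linarith

end Facet
end ToricNewton

namespace ToricNewton

/-- A generic staircase structure on the fan of the facets. -/
structure Geo {n : ℕ} (f : MvPolynomial (Fin n) ℂ) (ι : Type) where
  D : ι → Facet f
  ξ : Fin n → ℝ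
  t : (Fin n →₀ ℕ) → ι
  ht : ∀ a i, toLex ((D i).u (toR a), (D i).u ξ) ≤ toLex ((D (t a)).u (toR a), (D (t a)).u ξ)
  hinj : Function.Injective fun i => (D i).u ξ
  hS : ∀ a i, (D i).S {k | (D i).b.repr ξ k < 0} a ↔ t a = i

namespace Geo
variable {n : ℕ} {f : MvPolynomial (Fin n) ℂ} {ι : Type} [Fintype ι] (H : Geo f ι)

/-- the sign set -/
def σ (i : ι) : Set (Fin n) := {k | (H.D i).b.repr H.ξ k < 0}

/-- lexicographic weight with respect to one facet -/
noncomputable def L (i : ι) (a : Fin n →₀ ℕ) : ℝ ×ₗ ℝ :=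
  toLex ((H.D i).u (toR a), (H.D i).u H.ξ)

/-- lexicographic weight -/
noncomputable def wt (a : Fin n →₀ ℕ) : ℝ ×ₗ ℝ := H.L (H.t a) a

/-- shift -/
noncomputable def sh (ω : ℝ ×ₗ ℝ) : ℝ ×ₗ ℝ := toLex ((ofLex ω).1 + 1, (ofLex ω).2)

theorem sh_le {ω ω' : ℝ ×ₗ ℝ} (h : ω ≤ ω') : sh ω ≤ sh ω' := by
  rw [Prod.Lex.le_iff] at h
  rw [sh, sh, Prod.Lex.toLex_le_toLex]
  rcases h with h | h
  · left; simpa using h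
  · right; simpa using h

theorem sh_lt {ω ω' : ℝ ×ₗ ℝ} (h : ω < ω') : sh ω < sh ω' := by
  rw [Prod.Lex.lt_iff] at h
  rw [sh, sh, Prod.Lex.toLex_lt_toLex]
  rcases h with h | h
  · left; simpa using h
  · right; simpa using h

theorem L_le (i : ι) (a : Fin n →₀ ℕ) : H.L i a ≤ H.wt a := H.ht a i

theorem t_eq {i : ι} {a : Fin n →₀ ℕ} (h : H.wt a = H.L i a) : H.t a = i :=
  H.hinj (congrArg (fun z => (ofLex z).2) h)

theorem t_eq' {i i' : ι} {a a' : Fin n →₀ ℕ} (h : H.L i a = H.L i' a') : i = i' :=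
  H.hinj (congrArg (fun z => (ofLex z).2) h)

theorem wt_add {m a : Fin n →₀ ℕ} (hm : m ∈ f.support) : H.wt (m + a) ≤ sh (H.wt a) := by
  refine le_trans ?_ (sh_le (H.L_le (H.t (m + a)) a))
  rw [wt, L, L, sh, Prod.Lex.toLex_le_toLex]
  have h1 := (H.D (H.t (m + a))).le_one m hm
  have h2 : (H.D (H.t (m + a))).u (toR (m + a)) =
      (H.D (H.t (m + a))).u (toR m) + (H.D (H.t (m + a))).u (toR a) := by rw [toR_add, map_add]
  rcases h1.lt_or_eq with h | h
  · left
    change _ < (H.D (H.t (m + a))).u (toR a) + 1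
    simp only [h2]; linarith
  · right
    refine ⟨?_, le_rfl⟩
    change _ = (H.D (H.t (m + a))).u (toR a) + 1
    simp only [h2]; linarith

/-- Key facet comparison. -/
theorem key {m a : Fin n →₀ ℕ} {ω : ℝ ×ₗ ℝ} (hm : m ∈ f.support) (ha : H.wt a ≤ ω)
    (h : H.wt (m + a) = sh ω) {i : ι} (hi : (ofLex ω).2 = (H.D i).u H.ξ) :
    (H.D i).u (toR m) = 1 ∧ H.wt a = ω := by
  have h0 : H.t (m + a) = i := by
    apply H.hinj
    have := congrArg (fun z => (ofLex z).2) h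
    exact this.trans hi
  have h1 : (H.D i).u (toR (m + a)) = (ofLex ω).1 + 1 := by
    have := congrArg (fun z => (ofLex z).1) h
    rw [← h0]
    exact this
  have h2 := (H.D i).le_one m hm
  rw [toR_add, map_add] at h1
  have h3 : H.L i a ≤ ω := (H.L_le i a).trans ha
  have h4 := h3
  rw [Prod.Lex.le_iff] at h4
  have h5 : (ofLex (H.L i a)).1 = (H.D i).u (toR a) := rfl
  rw [h5] at h4
  have h6 : (H.D i).u (toR a) ≤ (ofLex ω).1 := by
    rcases h4 with h4 | h4
    · exact h4.le
    · exact h4.1.le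
  have h7 : (H.D i).u (toR a) = (ofLex ω).1 := by linarith
  refine ⟨by linarith, le_antisymm ha ?_⟩
  have : ω = H.L i a := by
    apply ofLex.injective
    exact Prod.ext h7.symm hi
  rw [this]
  exact H.L_le i a

theorem add_wt {m a : Fin n →₀ ℕ} {i : ι} (hm : m ∈ f.support) (hmu : (H.D i).u (toR m) = 1)
    (ha : H.t a = i) : H.t (m + a) = i ∧ H.wt (m + a) = sh (H.wt a) := by
  have h1 : H.t (m + a) = i := by
    rw [← H.hS]
    have h2 := (H.hS a i).2 ha
    have h3 := (H.D i).pos m hm hmu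
    intro k
    rw [Facet.c_add]
    exact ⟨add_nonneg (h3 k) (h2 k).1, fun hk => add_pos_of_nonneg_of_pos (h3 k) ((h2 k).2 hk)⟩
  refine ⟨h1, ?_⟩
  rw [wt, wt, h1, ha, L, L, sh, toR_add, map_add, hmu, add_comm]
  rfl

theorem support_log {j : Fin n} {m : Fin n →₀ ℕ} (h : m ∈ (X j * pderiv j f).support) :
    m ∈ f.support := by
  rw [mem_support_iff, coeff_log] at h
  exact mem_support_iff.2 (right_ne_zero_of_mul h)

theorem topmul (i : ι) {ω : ℝ ×ₗ ℝ} (hi : (ofLex ω).2 = (H.D i).u H.ξ) (j : Fin n)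
    (h : MvPolynomial (Fin n) ℂ) (hh : ∀ a ∈ h.support, H.wt a ≤ ω) :
    proj (fun a => H.wt a = sh ω) (X j * pderiv j f * h) =
      (H.D i).G j * proj (fun a => H.wt a = ω) h := by
  classical
  set p := proj (fun a => H.wt a = ω) h with hp
  have e : X j * pderiv j f * h = (H.D i).G j * p + ((X j * pderiv j f - (H.D i).G j) * h
      + (H.D i).G j * (h - p)) := by ring
  rw [e, proj_add, proj_add]
  have e1 : proj (fun a => H.wt a = sh ω) ((H.D i).G j * p) = (H.D i).G j * p := by
    apply proj_eq_self
    intro a ha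
    obtain ⟨a1, h1, a2, h2, rfl⟩ := Finset.mem_add.1 (MvPolynomial.support_mul _ _ ha)
    rw [hp, mem_support_proj] at h2
    have h3 := (H.D i).support_G h1
    have h4 : H.t a2 = i := by
      apply H.hinj
      have := congrArg (fun z => (ofLex z).2) h2.2
      exact this.trans hi
    rw [(H.add_wt h3.1 h3.2 h4).2, h2.2]
  have e2 : proj (fun a => H.wt a = sh ω) ((X j * pderiv j f - (H.D i).G j) * h) = 0 := by
    apply proj_eq_zero
    intro a ha hT
    obtain ⟨a1, h1, a2, h2, rfl⟩ := Finset.mem_add.1 (MvPolynomial.support_mul _ _ ha)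
    rw [mem_support_iff, coeff_sub, Facet.coeff_G, coeff_log] at h1
    have h3 : a1 ∈ f.support := by
      rw [mem_support_iff]; intro h0; apply h1; simp [h0]
    have h4 := H.key h3 (hh a2 h2) hT hi
    rw [if_pos h4.1, sub_self] at h1
    exact h1 rfl
  have e3 : proj (fun a => H.wt a = sh ω) ((H.D i).G j * (h - p)) = 0 := by
    apply proj_eq_zero
    intro a ha hT
    obtain ⟨a1, h1, a2, h2, rfl⟩ := Finset.mem_add.1 (MvPolynomial.support_mul _ _ ha)
    rw [mem_support_iff, coeff_sub, hp, coeff_proj] at h2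
    have h3 : a2 ∈ h.support := by
      rw [mem_support_iff]; intro h0; apply h2; simp [h0]
    have h4 := H.key ((H.D i).support_G h1).1 (hh a2 h3) hT hi
    rw [if_pos h4.2, sub_self] at h2
    exact h2 rfl
  rw [e1, e2, e3]; ring

theorem finite_wt (ω : ℝ ×ₗ ℝ) : {a | H.wt a ≤ ω}.Finite := by
  refine Set.Finite.subset (Set.finite_iUnion fun i => (H.D i).finite_le (ofLex ω).1) ?_
  intro a ha
  rw [Set.mem_iUnion]
  refine ⟨H.t a, fun k => ((H.hS a (H.t a)).2 rfl k).1, ?_⟩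
  rw [Set.mem_ofPred_eq, Prod.Lex.le_iff] at ha
  rcases ha with h | h
  · exact h.le
  · exact h.1.le

/-- rank of a weight -/
noncomputable def rk (a : Fin n →₀ ℕ) : ℕ := {a' | H.wt a' ≤ H.wt a}.ncard

theorem rk_lt {a b : Fin n →₀ ℕ} (h : H.wt a < H.wt b) : H.rk a < H.rk b := by
  apply Set.ncard_lt_ncard _ (H.finite_wt _)
  refine ⟨fun x hx => le_trans hx h.le, fun hs => ?_⟩
  have := hs (show b ∈ {a' | H.wt a' ≤ H.wt b} by simp)
  exact absurd this (not_le.2 h)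

theorem rk_pos (a : Fin n →₀ ℕ) : 0 < H.rk a :=
  (Set.ncard_pos (H.finite_wt _)).2 ⟨a, by simp⟩

theorem descent (ω₀ : ℝ ×ₗ ℝ) (g : MvPolynomial (Fin n) ℂ) (hg : ∀ a ∈ g.support, H.wt a ≤ sh ω₀)
    (N : ℕ) : ∀ h : Fin n → MvPolynomial (Fin n) ℂ,
      (∀ j, ∀ a ∈ (h j).support, H.wt a ≤ ω₀ ∨ H.rk a ≤ N) → g = ∑ j, X j * pderiv j f * h j →
      ∃ h' : Fin n → MvPolynomial (Fin n) ℂ, (∀ j, ∀ a ∈ (h' j).support, H.wt a ≤ ω₀) ∧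
        g = ∑ j, X j * pderiv j f * h' j := by
  classical
  induction N with
  | zero =>
    intro h h1 h2
    refine ⟨h, fun j a ha => ?_, h2⟩
    rcases h1 j a ha with h | h
    · exact h
    · exact absurd (H.rk_pos a) (by omega)
  | succ N ih =>
    intro h h1 h2
    by_cases hex : ∃ j, ∃ a ∈ (h j).support, ω₀ < H.wt a ∧ H.rk a = N + 1
    swap
    · push Not at hex
      refine ih h (fun j a ha => ?_) h2
      rcases h1 j a ha with h' | h'
      · exact Or.inl h'
      · by_cases hlt : ω₀ < H.wt a
        · have := hex j a ha hlt
          right; omega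
        · exact Or.inl (not_lt.1 hlt)
    · obtain ⟨j0, a0, ha0, hlt, hrk⟩ := hex
      set ω := H.wt a0 with hω
      set i := H.t a0 with hi
      have hωi : (ofLex ω).2 = (H.D i).u H.ξ := rfl
      have hle : ∀ j, ∀ a ∈ (h j).support, H.wt a ≤ ω := by
        intro j a ha
        rcases h1 j a ha with h' | h'
        · exact h'.trans hlt.le
        · by_contra hcon
          have := H.rk_lt (not_le.1 hcon)
          omega
      have hsum : ∑ j, (H.D i).G j * proj (fun a => H.wt a = ω) (h j) = 0 := by
        have e : proj (fun a => H.wt a = sh ω) g = 0 :=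
          proj_eq_zero _ _ fun a ha hT =>
            absurd (hT ▸ hg a ha) (not_le.2 (sh_lt hlt))
        rw [h2, proj_sum] at e
        rw [← e]
        exact Finset.sum_congr rfl fun j _ => (H.topmul i hωi j (h j) (hle j)).symm
      have ht : ∀ a, H.wt a = ω → H.t a = i := fun a ha => H.t_eq' ha
      obtain ⟨K, hK1, hK2, hK3, hK4⟩ := (H.D i).koszulG (σ := H.σ i) (ofLex ω).1 _
        (fun j a ha => by
          have := ((mem_support_proj _ _ _).1 ha).2
          exact (H.hS a i).2 (ht a this))
        (fun j a ha => by
          have := ((mem_support_proj _ _ _).1 ha).2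
          rw [← ht a this, ← this]; rfl) hsum
      have hKt : ∀ j l, ∀ a ∈ (K j l).support, H.t a = i := fun j l a ha =>
        (H.hS a i).1 (hK2 j l a ha)
      have hKw : ∀ j l, ∀ a ∈ (K j l).support, sh (H.wt a) = ω := by
        intro j l a ha
        have e1 := hKt j l a ha
        rw [wt, e1, L, sh]
        apply ofLex.injective
        refine Prod.ext ?_ hωi.symm
        change (H.D i).u (toR a) + 1 = _
        rw [hK3 j l a ha]; ring
      have hKw' : ∀ j l, ∀ a ∈ (X l * pderiv l f * K j l).support, H.wt a ≤ ω := by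
        intro j l a ha
        obtain ⟨a1, q1, a2, q2, rfl⟩ := Finset.mem_add.1 (MvPolynomial.support_mul _ _ ha)
        rw [← hKw j l a2 q2]
        exact H.wt_add (support_log q1)
      set h' : Fin n → MvPolynomial (Fin n) ℂ :=
        fun j => h j - ∑ l, X l * pderiv l f * K j l with hh'
      have hle' : ∀ j, ∀ a ∈ (h' j).support, H.wt a ≤ ω := by
        intro j a ha
        by_contra hcon
        rw [mem_support_iff] at ha
        apply ha
        rw [hh']
        simp only [coeff_sub, coeff_sum]
        rw [notMem_support_iff.1 fun h0 => hcon (hle j a h0), zero_sub, neg_eq_zero]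
        exact Finset.sum_eq_zero fun l _ => notMem_support_iff.1 fun h0 => hcon (hKw' j l a h0)
      have hne : ∀ j, proj (fun a => H.wt a = ω) (h' j) = 0 := by
        intro j
        rw [hh']
        simp only [proj_sub, proj_sum]
        rw [hK4 j, sub_eq_zero]
        refine Finset.sum_congr rfl fun l _ => ?_
        by_cases hK0 : (K j l).support.Nonempty
        · obtain ⟨b, hb⟩ := hK0
          have e1 := hKw j l b hb
          have e2 : ∀ a ∈ (K j l).support, H.wt a = H.wt b := by
            intro a ha
            rw [wt, wt, hKt j l a ha, hKt j l b hb, L, L, hK3 j l a ha, hK3 j l b hb]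
          have e3 := H.topmul i (ω := H.wt b) (by rw [← hKt j l b hb]; rfl) l (K j l)
            fun a ha => (e2 a ha).le
          rw [e1, proj_eq_self _ _ e2] at e3
          exact e3.symm
        · rw [Finset.not_nonempty_iff_eq_empty, MvPolynomial.support_eq_empty] at hK0
          rw [hK0]; simp [proj_zero]
      refine ih h' (fun j a ha => ?_) ?_
      · right
        have e1 : H.wt a < ω := by
          refine lt_of_le_of_ne (hle' j a ha) fun e => ?_
          have := (mem_support_proj (fun a => H.wt a = ω) (h' j) a).2 ⟨ha, e⟩
          rw [hne j] at this
          simp at this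
        have := H.rk_lt e1
        omega
      · rw [hh']
        simp only [mul_sub, Finset.sum_sub_distrib]
        rw [← h2]
        have e0 : ∑ j, X j * pderiv j f * ∑ l, X l * pderiv l f * K j l = 0 := by
          set T := ∑ j, X j * pderiv j f * ∑ l, X l * pderiv l f * K j l with hT
          have : T = - T := by
            conv_lhs => rw [hT]
            rw [hT]
            simp only [Finset.mul_sum]
            rw [← Finset.sum_neg_distrib, Finset.sum_comm]
            refine Finset.sum_congr rfl fun j _ => ?_
            rw [← Finset.sum_neg_distrib]
            refine Finset.sum_congr rfl fun l _ => ?_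
            rw [hK1 l j]; ring
          exact self_eq_neg.1 this
        rw [e0, sub_zero]

theorem final (i : ι) (α : ℝ) (g : (H.D i).M (H.σ i)) (hg : ∀ a ∈ g.1.support, (H.D i).u (toR a) = α)
    (g0 : MvPolynomial (Fin n) ℂ) (hg0 : ∀ a ∈ g0.support, (H.D (H.t a)).u (toR a) < α)
    (h : Fin n → MvPolynomial (Fin n) ℂ) (e : g.1 - g0 = ∑ j, X j * pderiv j f * h j) :
    g ∈ UU ((H.D i).M (H.σ i)) (H.D i).x (H.D i).F ∅ Finset.univ := by
  classical
  set ω₀ : ℝ ×ₗ ℝ := toLex (α - 1, (H.D i).u H.ξ) with hω₀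
  have hsh : sh ω₀ = toLex (α, (H.D i).u H.ξ) := by
    rw [hω₀, sh]
    change toLex (α - 1 + 1, _) = _
    rw [sub_add_cancel]; rfl
  have hgt : ∀ a ∈ g.1.support, H.t a = i := fun a ha => (H.hS a i).1 (g.2 a ha)
  have hgw : ∀ a ∈ g.1.support, H.wt a = sh ω₀ := by
    intro a ha
    rw [hsh, wt, hgt a ha, L, hg a ha]
  have hg0w : ∀ a ∈ g0.support, H.wt a < sh ω₀ := by
    intro a ha
    rw [hsh, wt, L, Prod.Lex.toLex_lt_toLex]
    exact Or.inl (hg0 a ha)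
  obtain ⟨N, hN⟩ : ∃ N : ℕ, ∀ j, ∀ a ∈ (h j).support, H.rk a ≤ N := by
    refine ⟨∑ j, ∑ a ∈ (h j).support, H.rk a, fun j a ha => ?_⟩
    refine le_trans (Finset.single_le_sum (f := fun a => H.rk a) (fun _ _ => Nat.zero_le _) ha) ?_
    exact Finset.single_le_sum (f := fun j => ∑ a ∈ (h j).support, H.rk a)
      (fun _ _ => Nat.zero_le _) (Finset.mem_univ j)
  obtain ⟨h', h1, h2⟩ := H.descent ω₀ (g.1 - g0) (by
    intro a ha
    by_contra hcon
    rw [mem_support_iff] at ha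
    apply ha
    rw [coeff_sub, notMem_support_iff.1 fun h0 => hcon (hgw a h0).le,
      notMem_support_iff.1 fun h0 => hcon (hg0w a h0).le, sub_zero]) N h
    (fun j a ha => Or.inr (hN j a ha)) e
  have h3 := congrArg (proj fun a => H.wt a = sh ω₀) h2
  rw [proj_sub, proj_eq_self _ _ hgw, proj_eq_zero _ g0 fun a ha => (hg0w a ha).ne, sub_zero,
    proj_sum] at h3
  have hM : ∀ j, proj (fun a => H.wt a = ω₀) (h' j) ∈ (H.D i).M (H.σ i) := by
    intro j a ha
    have h4 := ((mem_support_proj _ _ _).1 ha).2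
    refine (H.hS a i).2 (H.hinj ?_)
    exact congrArg (fun z => (ofLex z).2) h4
  have h5 : g = ∑ j, ∑ k, (H.D i).F k • (⟨C ((H.D i).β k j : ℂ) * proj (fun a => H.wt a = ω₀) (h' j),
      (H.D i).C_mul_mem_M _ (hM j)⟩ : (H.D i).M (H.σ i)) := by
    apply Subtype.ext
    rw [h3, AddSubmonoidClass.coe_finsetSum]
    refine Finset.sum_congr rfl fun j _ => ?_
    rw [H.topmul i rfl j (h' j) (h1 j), AddSubmonoidClass.coe_finsetSum, Facet.G_eq, Finset.sum_mul]
    refine Finset.sum_congr rfl fun k _ => ?_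
    change _ = ((H.D i).F k).1 * (C ((H.D i).β k j : ℂ) * proj (fun a => H.wt a = ω₀) (h' j))
    ring
  rw [h5]
  exact Submodule.sum_mem _ fun j _ => Submodule.sum_mem _ fun k _ =>
    smul_mem_UU _ _ (Finset.mem_univ k) _

end Geo
end ToricNewton

namespace ToricNewton

section Geometry
variable {n : ℕ} {f : MvPolynomial (Fin n) ℂ}

theorem toR_mem_P {m : Fin n →₀ ℕ} (hm : m ∈ f.support) : toR m ∈ newtonPolytope f :=
  subset_convexHull ℝ _ (Or.inr ⟨m, hm, rfl⟩)

theorem zero_mem_P : (0 : Fin n → ℝ) ∈ newtonPolytope f :=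
  subset_convexHull ℝ _ (Or.inl rfl)

theorem convex_P : Convex ℝ (newtonPolytope f) := convex_convexHull ℝ _

theorem P_subset {A : Set (Fin n → ℝ)} (hA : Convex ℝ A) (h0 : (0 : Fin n → ℝ) ∈ A)
    (h : ∀ m ∈ f.support, toR m ∈ A) : newtonPolytope f ⊆ A := by
  refine convexHull_min ?_ hA
  rintro x (rfl | ⟨m, hm, rfl⟩)
  · exact h0
  · exact h m hm

theorem P_le (l : (Fin n → ℝ) →ₗ[ℝ] ℝ) {c : ℝ} (hc : 0 ≤ c) (h : ∀ m ∈ f.support, l (toR m) ≤ c)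
    {x : Fin n → ℝ} (hx : x ∈ newtonPolytope f) : l x ≤ c := by
  refine P_subset (A := {x | l x ≤ c}) (convex_halfSpace_le l.isLinear c) ?_ h hx
  simpa using hc

/-- points of the polytope on a supporting hyperplane -/
theorem P_tight (u : (Fin n → ℝ) →ₗ[ℝ] ℝ) (h : ∀ m ∈ f.support, u (toR m) ≤ 1)
    {x : Fin n → ℝ} (hx : x ∈ newtonPolytope f) (hux : u x = 1) :
    x ∈ convexHull ℝ (toR '' {m | m ∈ f.support ∧ u (toR m) = 1}) := by
  set T : Set (Fin n → ℝ) := toR '' {m | m ∈ f.support ∧ u (toR m) = 1}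
  have hT : ∀ y ∈ convexHull ℝ T, u y = 1 := by
    intro y hy
    refine convexHull_min (t := {y | u y = 1}) ?_ (convex_hyperplane u.isLinear 1) hy
    rintro _ ⟨m, hm, rfl⟩
    exact hm.2
  have hP : newtonPolytope f ⊆ {x | u x < 1} ∪ convexHull ℝ T := by
    refine P_subset ?_ (Or.inl (by simp)) ?_
    · intro x hx y hy a b ha hb hab
      have hx1 : u x ≤ 1 := hx.elim (fun h => le_of_lt h) (fun h => (hT _ h).le)
      have hy1 : u y ≤ 1 := hy.elim (fun h => le_of_lt h) (fun h => (hT _ h).le)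
      rcases eq_or_lt_of_le ha with rfl | ha
      · obtain rfl : b = 1 := by linarith
        simpa using hy
      rcases eq_or_lt_of_le hb with rfl | hb
      · obtain rfl : a = 1 := by linarith
        simpa using hx
      rcases hx with hx | hx
      · left
        have hx : u x < 1 := hx
        show u (a • x + b • y) < 1
        rw [map_add, map_smul, map_smul, smul_eq_mul, smul_eq_mul]
        nlinarith
      rcases hy with hy | hy
      · left
        have hy : u y < 1 := hy
        show u (a • x + b • y) < 1
        rw [map_add, map_smul, map_smul, smul_eq_mul, smul_eq_mul]
        nlinarith
      · exact Or.inr (convex_convexHull ℝ T hx hy ha.le hb.le hab)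
    · intro m hm
      rcases lt_or_eq_of_le (h m hm) with h1 | h1
      · exact Or.inl h1
      · exact Or.inr (subset_convexHull ℝ _ ⟨m, ⟨hm, h1⟩, rfl⟩)
  rcases hP hx with h1 | h1
  · exact absurd hux (ne_of_lt h1)
  · exact h1

open Classical in
theorem eval_faceRestrict (Δ : Set (Fin n → ℝ)) (i : Fin n) (x : Fin n → ℂ) :
    eval x (faceRestrict Δ (X i * pderiv i f)) =
      ∑ m ∈ f.support, if toR m ∈ Δ then (m i : ℂ) * f.coeff m * ∏ j, x j ^ (m j) else 0 := by
  have : faceRestrict Δ (X i * pderiv i f) =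
      ∑ m ∈ f.support, if toR m ∈ Δ then monomial m ((m i : ℂ) * f.coeff m) else 0 := by
    change proj (fun m => toR m ∈ Δ) (X i * pderiv i f) = _
    ext a
    rw [coeff_proj, coeff_log, coeff_sum, Finset.sum_eq_single a]
    · split_ifs <;> simp
    · intro b _ hb
      split_ifs <;> simp [coeff_monomial, hb]
    · intro h
      rw [notMem_support_iff] at h
      split_ifs <;> simp [h]
  rw [this, map_sum]
  refine Finset.sum_congr rfl fun m _ => ?_
  split_ifs
  · rw [eval_monomial, Finsupp.prod_fintype _ _ (by simp)]
  · simp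

/-- `u` defines a facet of the Newton boundary -/
def IsFct (f : MvPolynomial (Fin n) ℂ) (u : (Fin n → ℝ) →ₗ[ℝ] ℝ) : Prop :=
  (∀ m ∈ f.support, u (toR m) ≤ 1) ∧
    Submodule.span ℝ (toR '' {m | m ∈ f.support ∧ u (toR m) = 1}) = ⊤

theorem exists_facet (hn : 1 ≤ n) (hnd : Nondegenerate f)
    (hsimp : ∀ Δ : Set (Fin n → ℝ), NBFace f Δ → IsSimplex Δ)
    (u : (Fin n → ℝ) →ₗ[ℝ] ℝ) (hu : IsFct f u) : ∃ D : Facet f, D.u = u := by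
  classical
  obtain ⟨h1, hsp⟩ := hu
  set T : Set (Fin n →₀ ℕ) := {m | m ∈ f.support ∧ u (toR m) = 1} with hTdef
  set Δ : Set (Fin n → ℝ) := {x ∈ newtonPolytope f | u x = 1} with hΔ
  have hTne : T.Nonempty := by
    by_contra h
    rw [Set.not_nonempty_iff_eq_empty] at h
    rw [h, Set.image_empty, Submodule.span_empty] at hsp
    have : Nonempty (Fin n) := ⟨⟨0, hn⟩⟩
    exact bot_ne_top hsp
  have hNB : NBFace f Δ := by
    obtain ⟨m, hm⟩ := hTne
    refine ⟨⟨⟨toR m, toR_mem_P hm.1, hm.2⟩, u, 1, fun x hx => P_le u zero_le_one h1 hx, rfl⟩, ?_⟩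
    intro h
    have := h.2
    simp at this
  obtain ⟨k, p, hp, hΔp⟩ := hsimp Δ hNB
  have hpu : ∀ i, u (p i) = 1 := by
    intro i
    have : p i ∈ Δ := by rw [hΔp]; exact subset_convexHull ℝ _ ⟨i, rfl⟩
    exact this.2
  have hli : LinearIndependent ℝ p := by
    rw [linearIndependent_iff']
    intro s g hg
    rw [affineIndependent_iff] at hp
    refine hp s g ?_ hg
    have := congrArg u hg
    simpa [map_sum, hpu] using this
  have hspan : ⊤ ≤ Submodule.span ℝ (Set.range p) := by
    rw [← hsp, Submodule.span_le]
    rintro _ ⟨m, hm, rfl⟩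
    have : toR m ∈ Δ := ⟨toR_mem_P hm.1, hm.2⟩
    rw [hΔp] at this
    exact convexHull_min Submodule.subset_span (Submodule.convex _) this
  let b0 := Module.Basis.mk hli hspan
  have hcard : k + 1 = n := by
    have := Module.finrank_eq_card_basis b0
    simpa using this.symm
  let b : Module.Basis (Fin n) ℝ (Fin n → ℝ) := b0.reindex (finCongr hcard)
  have hb0 : Set.range p = Set.range b := by
    rw [Module.Basis.range_reindex, Module.Basis.coe_mk]
  rw [hb0] at hΔp
  have hbΔ : ∀ i, b i ∈ Δ := fun i => by rw [hΔp]; exact subset_convexHull ℝ _ ⟨i, rfl⟩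
  have hu : ∀ i, u (b i) = 1 := fun i => (hbΔ i).2
  have hus : ∀ x, u x = ∑ i, b.repr x i := by
    intro x
    conv_lhs => rw [← b.sum_repr x]
    rw [map_sum]
    exact Finset.sum_congr rfl fun i _ => by rw [map_smul, hu, smul_eq_mul, mul_one]
  have hpos : ∀ x ∈ Δ, ∀ i, 0 ≤ b.repr x i := by
    intro x hx i
    rw [hΔp] at hx
    refine convexHull_min (t := {x | 0 ≤ b.coord i x}) ?_ (convex_halfSpace_ge (b.coord i).isLinear 0) hx
    rintro _ ⟨l, rfl⟩
    simp [Finsupp.single_apply]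
    split_ifs <;> simp
  have hle : ∀ x ∈ Δ, ∀ i, b.repr x i ≤ 1 := by
    intro x hx i
    have h := hus x
    rw [hx.2] at h
    rw [h]
    exact Finset.single_le_sum (fun i _ => hpos x hx i) (Finset.mem_univ i)
  have hTΔ : ∀ m ∈ T, toR m ∈ Δ := fun m hm => ⟨toR_mem_P hm.1, hm.2⟩
  have hex : ∀ i, ∃ m ∈ T, b i = toR m := by
    intro i
    have hT1 := P_tight u h1 (hbΔ i).1 (hu i)
    obtain ⟨m, hm, hm1⟩ : ∃ m ∈ T, b.repr (toR m) i = 1 := by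
      by_contra hcon
      push Not at hcon
      have : b i ∈ {x | b.coord i x < 1} := by
        refine convexHull_min ?_ (convex_halfSpace_lt (b.coord i).isLinear 1) hT1
        rintro _ ⟨m, hm, rfl⟩
        exact lt_of_le_of_ne (hle _ (hTΔ m hm) i) (hcon m hm)
      have h2 : b.coord i (b i) < 1 := this
      simp at h2
    refine ⟨m, hm, ?_⟩
    apply b.repr.injective
    have h3 := hus (toR m)
    rw [hm.2, ← Finset.add_sum_erase _ _ (Finset.mem_univ i), hm1] at h3
    have h4 : ∑ l ∈ Finset.univ.erase i, b.repr (toR m) l = 0 := by linarith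
    rw [Finset.sum_eq_zero_iff_of_nonneg (fun l _ => hpos _ (hTΔ m hm) l)] at h4
    ext l
    rw [b.repr_self, Finsupp.single_apply]
    split_ifs with h
    · rw [← h, hm1]
    · exact (h4 l (Finset.mem_erase.2 ⟨Ne.symm h, Finset.mem_univ _⟩)).symm
  choose β hβ hbβ using hex
  refine ⟨⟨u, b, β, hbβ, hu, fun i => (hβ i).1, h1, fun m hm hm1 => hpos _ ⟨toR_mem_P hm, hm1⟩, ?_⟩, rfl⟩
  intro S hS
  -- a supporting functional for the face spanned by `S`
  let s : (Fin n → ℝ) →ₗ[ℝ] ℝ := ∑ i ∈ Sᶜ, b.coord i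
  have hs : ∀ x, s x = ∑ i ∈ Sᶜ, b.repr x i := fun x => by simp [s]
  obtain ⟨δ, hδ0, hδ⟩ : ∃ δ : ℝ, 0 < δ ∧ ∀ m ∈ f.support, u (toR m) < 1 → u (toR m) - δ * s (toR m) < 1 := by
    have : ∀ᶠ δ in nhdsWithin (0:ℝ) (Set.Ioi 0), ∀ m ∈ f.support, u (toR m) < 1 →
        u (toR m) - δ * s (toR m) < 1 := by
      rw [Filter.eventually_all_finset]
      intro m hm
      rw [Filter.eventually_imp_distrib_left]
      intro hm1
      have hc : Continuous fun δ : ℝ => u (toR m) - δ * s (toR m) := by fun_prop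
      have := (hc.tendsto 0).eventually (gt_mem_nhds (a := 1) (by simpa using hm1))
      exact this.filter_mono nhdsWithin_le_nhds
    obtain ⟨δ, h, h'⟩ := (this.and self_mem_nhdsWithin).exists
    exact ⟨δ, h', h⟩
  let l := u - δ • s
  have hl : ∀ x, l x = u x - δ * s x := fun x => by simp [l]
  have hsm : ∀ m ∈ f.support, u (toR m) = 1 → 0 ≤ s (toR m) := by
    intro m hm hm1
    rw [hs]
    exact Finset.sum_nonneg fun i _ => hpos _ ⟨toR_mem_P hm, hm1⟩ i
  have hl1 : ∀ m ∈ f.support, l (toR m) ≤ 1 := by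
    intro m hm
    rw [hl]
    rcases lt_or_eq_of_le (h1 m hm) with h | h
    · exact (hδ m hm h).le
    · have := mul_nonneg hδ0.le (hsm m hm h)
      linarith
  have hliff : ∀ m ∈ f.support, l (toR m) = 1 ↔ (u (toR m) = 1 ∧ ∀ k ∉ S, b.repr (toR m) k = 0) := by
    intro m hm
    rw [hl]
    rcases lt_or_eq_of_le (h1 m hm) with h | h
    · constructor
      · intro h2; exact absurd h2 (hδ m hm h).ne
      · intro h2; exact absurd h2.1 h.ne
    · rw [h]
      have : (1 - δ * s (toR m) = 1) ↔ s (toR m) = 0 := by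
        constructor
        · intro h2
          have : δ * s (toR m) = 0 := by linarith
          exact (mul_eq_zero.1 this).resolve_left hδ0.ne'
        · intro h2; rw [h2]; ring
      rw [this, hs, Finset.sum_eq_zero_iff_of_nonneg (fun i _ => hpos _ ⟨toR_mem_P hm, h⟩ i)]
      simp
  have hface : NBFace f {x ∈ newtonPolytope f | l x = 1} := by
    obtain ⟨k, hk⟩ := hS
    refine ⟨⟨⟨b k, (hbΔ k).1, ?_⟩, l, 1, fun x hx => P_le l zero_le_one hl1 hx, rfl⟩, ?_⟩
    · rw [hl, hu, hs, Finset.sum_eq_zero, mul_zero, sub_zero]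
      intro i hi
      rw [b.repr_self, Finsupp.single_apply, if_neg]
      rintro rfl
      simp [hk] at hi
    · intro h
      have := h.2
      simp at this
  have := hnd _ hface
  rintro ⟨x, hx0, hx⟩
  refine this ⟨x, hx0, fun i => ?_⟩
  rw [eval_faceRestrict]
  refine Eq.trans ?_ (hx i)
  refine Finset.sum_congr rfl fun m hm => ?_
  have hiff : toR m ∈ {x ∈ newtonPolytope f | l x = 1} ↔
      (u (toR m) = 1 ∧ ∀ k ∉ S, b.repr (toR m) k = 0) := by
    rw [← hliff m hm]
    exact ⟨fun h => h.2, fun h => ⟨toR_mem_P hm, h⟩⟩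
  by_cases h : (u (toR m) = 1 ∧ ∀ k ∉ S, b.repr (toR m) k = 0)
  · rw [if_pos (hiff.2 h), if_pos h]
  · rw [if_neg (fun h' => h (hiff.1 h')), if_neg h]

end Geometry
end ToricNewton

namespace ToricNewton

section Generic
variable {n : ℕ}
open Filter Topology

theorem gen_ev (W : Submodule ℝ (Fin n → ℝ)) {η : Fin n → ℝ} (hη : η ∉ W) (ξ : Fin n → ℝ) :
    ∀ᶠ ε in 𝓝[>] (0:ℝ), ξ + ε • η ∉ W := by
  have hF : {ε : ℝ | ξ + ε • η ∈ W}.Subsingleton := by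
    intro ε hε ε' hε'
    by_contra hne
    apply hη
    have h1 : (ε - ε') • η ∈ W := by
      have := W.sub_mem hε hε'
      rwa [add_sub_add_left_eq_sub, ← sub_smul] at this
    have h2 := W.smul_mem (ε - ε')⁻¹ h1
    rwa [smul_smul, inv_mul_cancel₀ (sub_ne_zero.2 hne), one_smul] at h2
  have hcl : IsClosed ({ε : ℝ | ξ + ε • η ∈ W} \ {0}) :=
    (hF.finite.subset Set.sdiff_subset).isClosed
  have h3 : ({ε : ℝ | ξ + ε • η ∈ W} \ {0})ᶜ ∈ 𝓝 (0:ℝ) :=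
    hcl.isOpen_compl.mem_nhds (by simp)
  filter_upwards [nhdsWithin_le_nhds h3, self_mem_nhdsWithin] with ε h4 h5 h6
  exact h4 ⟨h6, ne_of_gt h5⟩

theorem ev_pos {x : Fin n → ℝ} (hx : ∀ i, 0 < x i) (y : Fin n → ℝ) :
    ∀ᶠ ε in 𝓝[>] (0:ℝ), ∀ i, 0 < (x + ε • y) i := by
  rw [eventually_all]
  intro i
  have hc : Continuous fun ε : ℝ => (x + ε • y) i := by
    simp only [Pi.add_apply, Pi.smul_apply, smul_eq_mul]; fun_prop
  exact ((hc.tendsto 0).eventually (lt_mem_nhds (a := 0) (by simpa using hx i))).filter_mono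
    nhdsWithin_le_nhds

theorem gen_exists (𝒲 : Set (Submodule ℝ (Fin n → ℝ))) (hfin : 𝒲.Finite) (htop : ⊤ ∉ 𝒲) :
    ∃ η : Fin n → ℝ, (∀ i, 0 < η i) ∧ ∀ W ∈ 𝒲, η ∉ W := by
  have h := Subspace.biUnion_ne_univ_of_top_notMem (s := hfin.toFinset) (by simpa using htop)
  obtain ⟨η, hη⟩ := (Set.ne_univ_iff_exists_notMem _).1 h
  have hη' : ∀ W ∈ 𝒲, η ∉ W := by
    intro W hW hm
    apply hη
    simp only [Set.mem_iUnion]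
    exact ⟨W, hfin.mem_toFinset.2 hW, hm⟩
  have h1 : ∀ᶠ ε in 𝓝[>] (0:ℝ), ∀ W ∈ 𝒲, (fun _ => 1) + ε • η ∉ W := by
    rw [eventually_all_finite hfin]
    exact fun W hW => gen_ev W (hη' W hW) _
  obtain ⟨ε, h2, h3⟩ := (h1.and (ev_pos (x := fun _ => 1) (by simp) η)).exists
  exact ⟨_, h3, h2⟩

end Generic

section Fan
open Filter Topology
open scoped Pointwise
variable {n : ℕ} {f : MvPolynomial (Fin n) ℂ}

theorem fct_finite : {u | IsFct f u}.Finite := by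
  classical
  refine Set.Finite.of_finite_image (f := fun u => f.support.filter fun m => u (toR m) = 1) ?_ ?_
  · refine Set.Finite.subset (f.support.powerset.finite_toSet) ?_
    rintro _ ⟨u, _, rfl⟩
    exact Finset.mem_coe.2 (Finset.mem_powerset.2 (Finset.filter_subset _ _))
  · intro u hu u' hu' he
    refine LinearMap.ext_on_range (v := fun m : {m | m ∈ f.support ∧ u (toR m) = 1} => toR m.1) ?_ ?_
    · rw [← hu.2]
      congr 1
      ext x; simp
    · rintro ⟨m, hm⟩
      have : m ∈ f.support.filter fun m => u (toR m) = 1 := by simpa using hm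
      have he' : (f.support.filter fun m => u (toR m) = 1) =
        f.support.filter fun m => u' (toR m) = 1 := he
      rw [he', Finset.mem_filter] at this
      rw [hm.2, this.2]

theorem simplex_mem_P (hconv : Convenient f) : ∃ K : Fin n → ℝ, (∀ i, 0 < K i) ∧
    ∀ x : Fin n → ℝ, (∀ i, 0 ≤ x i) → ∑ i, x i / K i ≤ 1 → x ∈ newtonPolytope f := by
  choose k hk hkf using hconv
  refine ⟨fun i => k i, fun i => Nat.cast_pos.2 (hk i), fun x hx hs => ?_⟩
  have hk0 : ∀ i, (0:ℝ) < k i := fun i => by exact_mod_cast hk i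
  let w : Option (Fin n) → ℝ := fun o => o.elim (1 - ∑ i, x i / k i) fun i => x i / k i
  let z : Option (Fin n) → (Fin n → ℝ) := fun o => o.elim 0 fun i => toR (Finsupp.single i (k i))
  have hm := convex_P (f := f) |>.sum_mem (t := Finset.univ) (w := w) (z := z) ?_ ?_ ?_
  · rw [Fintype.sum_option] at hm
    convert hm using 1
    ext j
    simp only [w, z, Option.elim, smul_zero, zero_add, Finset.sum_apply, Pi.smul_apply, smul_eq_mul, toR]
    rw [Finset.sum_eq_single j]
    · have := (hk0 j).ne'
      simp; field_simp
    · intro b _ hb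
      simp [Finsupp.single_apply, hb]
    · simp
  · rintro (_ | i) _
    · simp [w]; linarith
    · exact div_nonneg (hx i) (hk0 i).le
  · rw [Fintype.sum_option]; simp [w]
  · rintro (_ | i) _
    · exact zero_mem_P
    · exact toR_mem_P (mem_support_iff.2 (hkf i))

theorem isCompact_P : IsCompact (newtonPolytope f) := by
  refine Set.Finite.isCompact_convexHull (𝕜 := ℝ) ?_
  exact (Set.finite_singleton _).union (f.support.finite_toSet.image _)

theorem tight_nonneg (D : Facet f) {x : Fin n → ℝ} (hx : x ∈ newtonPolytope f) (hux : D.u x = 1)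
    (k : Fin n) : 0 ≤ D.b.repr x k := by
  have h := P_tight D.u D.le_one hx hux
  refine convexHull_min (t := {x | 0 ≤ D.b.coord k x}) ?_ (convex_halfSpace_ge (D.b.coord k).isLinear 0) h
  rintro _ ⟨m, hm, rfl⟩
  exact D.pos m hm.1 hm.2 k

theorem generic_cone (hn : 1 ≤ n) (hconv : Convenient f) (a : Fin n → ℝ) (ha : ∀ i, 0 < a i)
    (hgen : ∀ S ⊆ (f.support : Set (Fin n →₀ ℕ)), a ∈ Submodule.span ℝ (toR '' S) →
      Submodule.span ℝ (toR '' S) = ⊤) :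
    ∃ u, IsFct f u ∧ ∀ D : Facet f, D.u = u → ∀ k, 0 ≤ D.b.repr a k := by
  obtain ⟨K, hK, hKP⟩ := simplex_mem_P hconv
  -- a small multiple of `a` is interior
  have hin : ∀ x : Fin n → ℝ, (∀ i, 0 < x i) → ∑ i, x i / K i < 1 → x ∈ interior (newtonPolytope f) := by
    intro x hx hs
    rw [mem_interior]
    refine ⟨{x | (∀ i, 0 < x i) ∧ ∑ i, x i / K i < 1}, fun y hy => hKP y (fun i => (hy.1 i).le) hy.2.le, ?_, hx, hs⟩
    refine IsOpen.inter ?_ ?_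
    · have : {x : Fin n → ℝ | ∀ i, 0 < x i} = ⋂ i, {x : Fin n → ℝ | 0 < x i} := by ext; simp
      show IsOpen {x : Fin n → ℝ | ∀ i, 0 < x i}
      rw [this]
      exact isOpen_iInter_of_finite fun i => isOpen_lt continuous_const (continuous_apply i)
    · show IsOpen {x : Fin n → ℝ | ∑ i, x i / K i < 1}
      exact isOpen_lt (by fun_prop) continuous_const
  set s := ∑ i, a i / K i with hs
  have hs0 : 0 ≤ s := Finset.sum_nonneg fun i _ => (div_pos (ha i) (hK i)).le
  let ε : ℝ := 1 / (s + 2)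
  have hε : 0 < ε := by positivity
  have hεin : ε • a ∈ interior (newtonPolytope f) := by
    refine hin _ (fun i => by simpa using mul_pos hε (ha i)) ?_
    have : ∑ i, (ε • a) i / K i = ε * s := by
      rw [hs, Finset.mul_sum]
      exact Finset.sum_congr rfl fun i _ => by simp; ring
    rw [this]
    simp only [ε]
    rw [one_div, ← div_eq_inv_mul, div_lt_one (by positivity)]
    linarith
  have hεP : ε • a ∈ newtonPolytope f := interior_subset hεin
  -- the largest multiple
  have hcl : Continuous fun t : ℝ => t • a := by fun_prop
  have hne : a ≠ 0 := fun h => by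
    have := ha ⟨0, hn⟩; rw [h] at this; simp at this
  have hcpt : IsCompact {t : ℝ | t • a ∈ newtonPolytope f} := by
    rw [Metric.isCompact_iff_isClosed_bounded]
    refine ⟨(isCompact_P.isClosed).preimage hcl, ?_⟩
    obtain ⟨R, hR⟩ := isCompact_P (f := f).isBounded.exists_norm_le
    rw [isBounded_iff_forall_norm_le]
    refine ⟨R / ‖a‖, fun t ht => ?_⟩
    have := hR _ ht
    rw [norm_smul] at this
    rwa [le_div_iff₀ (norm_pos_iff.2 hne)]
  obtain ⟨τ, hτ, hmax⟩ := hcpt.exists_isMaxOn ⟨ε, hεP⟩ continuousOn_id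
  have hmax' : ∀ t : ℝ, t • a ∈ newtonPolytope f → t ≤ τ := fun t ht => hmax ht
  have hετ : ε ≤ τ := hmax' _ (interior_subset hεin)
  have hτ0 : 0 < τ := lt_of_lt_of_le hε hετ
  have hyint : τ • a ∉ interior (newtonPolytope f) := by
    intro h
    have h1 : ∀ᶠ t in 𝓝 τ, t • a ∈ interior (newtonPolytope f) :=
      (hcl.tendsto τ).eventually (isOpen_interior.mem_nhds h)
    have h2 : ∀ᶠ t in 𝓝[>] τ, t • a ∈ interior (newtonPolytope f) := h1.filter_mono nhdsWithin_le_nhds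
    obtain ⟨t, h3, h4⟩ := (h2.and self_mem_nhdsWithin).exists
    exact absurd (hmax' t (interior_subset h3)) (not_le.2 h4)
  obtain ⟨ℓ, hℓ⟩ := geometric_hahn_banach_open_point convex_P.interior isOpen_interior hyint
  have hℓP : ∀ x ∈ newtonPolytope f, ℓ x ≤ ℓ (τ • a) := by
    intro x hx
    have h1 := convex_P (f := f) |>.closure_interior_eq_closure_of_nonempty_interior ⟨_, hεin⟩
    have h2 : x ∈ closure (interior (newtonPolytope f)) := h1 ▸ subset_closure hx
    exact closure_minimal (t := {x | ℓ x ≤ ℓ (τ • a)}) (fun y hy => (hℓ y hy).le)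
      (isClosed_le ℓ.continuous continuous_const) h2
  have hpos : 0 < ℓ (τ • a) := by
    have h1 := hℓ _ hεin
    rw [map_smul, map_smul, smul_eq_mul, smul_eq_mul] at h1
    rw [map_smul, smul_eq_mul]
    have : 0 < ℓ a := by
      by_contra h
      nlinarith
    positivity
  let u : (Fin n → ℝ) →ₗ[ℝ] ℝ := (ℓ (τ • a))⁻¹ • (ℓ : (Fin n → ℝ) →ₗ[ℝ] ℝ)
  have hu : ∀ x, u x = (ℓ (τ • a))⁻¹ * ℓ x := fun x => by simp [u]
  have huy : u (τ • a) = 1 := by rw [hu, inv_mul_cancel₀ hpos.ne']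
  have huP : ∀ x ∈ newtonPolytope f, u x ≤ 1 := by
    intro x hx
    rw [hu, ← div_eq_inv_mul, div_le_one hpos]
    exact hℓP x hx
  have hus : ∀ m ∈ f.support, u (toR m) ≤ 1 := fun m hm => huP _ (toR_mem_P hm)
  refine ⟨u, ⟨hus, ?_⟩, ?_⟩
  · refine hgen _ (fun m hm => hm.1) ?_
    have h1 : τ • a ∈ Submodule.span ℝ (toR '' {m | m ∈ f.support ∧ u (toR m) = 1}) :=
      convexHull_min Submodule.subset_span (Submodule.convex _) (P_tight u hus hτ huy)
    have h2 := Submodule.smul_mem _ τ⁻¹ h1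
    rwa [smul_smul, inv_mul_cancel₀ hτ0.ne', one_smul] at h2
  · rintro D hD k
    have h1 := tight_nonneg D hτ (by rw [hD]; exact huy) k
    rw [map_smul, Finsupp.smul_apply, smul_eq_mul] at h1
    exact nonneg_of_mul_nonneg_right h1 hτ0

/-- the cone of a facet -/
def Facet.C (D : Facet f) : Set (Fin n → ℝ) := {x | ∀ k, 0 ≤ D.b.repr x k}

theorem Facet.isClosed_C (D : Facet f) : IsClosed D.C := by
  have : D.C = ⋂ k, {x | 0 ≤ D.b.coord k x} := by ext; simp [Facet.C]
  rw [this]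
  exact isClosed_iInter fun k => isClosed_le continuous_const (D.b.coord k).continuous_of_finiteDimensional

variable {ι : Type} [Finite ι] (D : ι → Facet f)

theorem exists_cone (hn : 1 ≤ n) (hconv : Convenient f) (hD : ∀ u, IsFct f u → ∃ i, (D i).u = u)
    (a : Fin n → ℝ) (ha : ∀ i, 0 ≤ a i) : ∃ i, a ∈ (D i).C := by
  let 𝒲 : Set (Submodule ℝ (Fin n → ℝ)) :=
    ((fun S => Submodule.span ℝ (toR '' S)) '' 𝒫 (f.support : Set (Fin n →₀ ℕ))) \ {⊤}
  have hfin : 𝒲.Finite := by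
    refine Set.Finite.subset (Set.Finite.image _ ?_) Set.sdiff_subset
    exact Set.Finite.powerset f.support.finite_toSet
  obtain ⟨η, hη, hηW⟩ := gen_exists 𝒲 hfin (by simp [𝒲])
  have h1 : ∀ᶠ ε in 𝓝[>] (0:ℝ), ∀ W ∈ 𝒲, a + ε • η ∉ W := by
    rw [eventually_all_finite hfin]
    exact fun W hW => gen_ev W (hηW W hW) _
  by_contra! hcon
  have h2 : ∀ᶠ ε in 𝓝[>] (0:ℝ), ∀ i, a + ε • η ∉ (D i).C := by
    rw [eventually_all]
    intro i
    have hc : Continuous fun ε : ℝ => a + ε • η := by fun_prop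
    exact ((hc.tendsto 0).eventually ((D i).isClosed_C.isOpen_compl.mem_nhds
      (by simpa using hcon i))).filter_mono nhdsWithin_le_nhds
  obtain ⟨ε, ⟨h3, h4⟩, h5⟩ := ((h1.and h2).and self_mem_nhdsWithin).exists
  obtain ⟨u, hu, hk⟩ := generic_cone hn hconv (a + ε • η) (fun i => by
      have := mul_pos (show (0:ℝ) < ε from h5) (hη i)
      have := ha i
      simp; linarith) (by
      intro S hS hm
      by_contra hne
      exact h3 _ ⟨⟨S, hS, rfl⟩, hne⟩ hm)
  obtain ⟨i, hi⟩ := hD u hu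
  exact h4 i (hk (D i) hi)

theorem Facet.u_sum (D : Facet f) (u : (Fin n → ℝ) →ₗ[ℝ] ℝ) (x : Fin n → ℝ) :
    u x = ∑ k, D.b.repr x k * u (D.b k) := by
  conv_lhs => rw [← D.b.sum_repr x]
  rw [map_sum]
  exact Finset.sum_congr rfl fun i _ => by rw [map_smul, smul_eq_mul]

theorem Facet.le_of_C (D D' : Facet f) {x : Fin n → ℝ} (hx : x ∈ D.C) : D'.u x ≤ D.u x := by
  rw [D.u_sum D'.u, D.u_sum D.u]
  refine Finset.sum_le_sum fun k _ => mul_le_mul_of_nonneg_left ?_ (hx k)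
  rw [D.hu, D.hb]
  exact D'.le_one _ (D.mem k)

theorem Facet.tight_of_C (D D' : Facet f) {x : Fin n → ℝ} (hx : x ∈ D.C) (h : D.u x ≤ D'.u x) :
    x ∈ D'.C := by
  have he : D'.u x = D.u x := le_antisymm (D.le_of_C D' hx) h
  have h0 : ∑ k, D.b.repr x k * (1 - D'.u (D.b k)) = 0 := by
    have e1 := D.u_sum D'.u x
    have e2 := D.u_sum D.u x
    simp only [D.hu, mul_one] at e2
    simp only [mul_sub, mul_one, Finset.sum_sub_distrib]
    rw [← e1, ← e2, he, sub_self]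
  have hle : ∀ k, D'.u (D.b k) ≤ 1 := fun k => by
    rw [D.hb]; exact D'.le_one _ (D.mem k)
  rw [Finset.sum_eq_zero_iff_of_nonneg (fun k _ => mul_nonneg (hx k) (sub_nonneg.2 (hle k)))] at h0
  intro l
  have hl := D.u_sum (D'.b.coord l) x
  rw [Module.Basis.coord_apply] at hl
  rw [hl]
  refine Finset.sum_nonneg fun k _ => ?_
  rcases mul_eq_zero.1 (h0 k (Finset.mem_univ k)) with h1 | h1
  · rw [h1, zero_mul]
  · refine mul_nonneg (hx k) ?_
    rw [Module.Basis.coord_apply, D.hb]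
    refine D'.pos _ (D.mem k) ?_ l
    rw [← D.hb]; linarith

theorem cone_of_max (hn : 1 ≤ n) (hconv : Convenient f) (hD : ∀ u, IsFct f u → ∃ i, (D i).u = u)
    (a : Fin n → ℝ) (ha : ∀ i, 0 ≤ a i) (i : ι) (hi : ∀ i', (D i').u a ≤ (D i).u a) : a ∈ (D i).C := by
  obtain ⟨i', h⟩ := exists_cone D hn hconv hD a ha
  exact (D i').tight_of_C (D i) h (hi i')

theorem Facet.mem_P (D : Facet f) {x : Fin n → ℝ} (hx : x ∈ D.C) (h1 : D.u x = 1) :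
    x ∈ newtonPolytope f := by
  rw [← D.b.sum_repr x]
  refine convex_P.sum_mem (fun k _ => hx k) ?_ fun k _ => ?_
  · rw [← h1, D.u_sum D.u]; simp [D.hu]
  · rw [D.hb]; exact toR_mem_P (D.mem k)

theorem Facet.u_nonneg (D : Facet f) {x : Fin n → ℝ} (hx : x ∈ D.C) : 0 ≤ D.u x := by
  rw [D.u_sum D.u]
  exact Finset.sum_nonneg fun k _ => by rw [D.hu, mul_one]; exact hx k

theorem Facet.smul_C (D : Facet f) {x : Fin n → ℝ} (hx : x ∈ D.C) {t : ℝ} (ht : 0 ≤ t) : t • x ∈ D.C := by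
  intro k
  rw [map_smul, Finsupp.smul_apply, smul_eq_mul]
  exact mul_nonneg ht (hx k)

theorem Facet.nu_eq (D : Facet f) {x : Fin n → ℝ} (hx : x ∈ D.C) : nu f x = D.u x := by
  unfold nu
  rcases eq_or_lt_of_le (D.u_nonneg hx) with h | h
  · have : x = 0 := by
      have h2 := D.u_sum D.u x
      rw [← h] at h2
      have h3 := (Finset.sum_eq_zero_iff_of_nonneg
        (fun k _ => by rw [D.hu, mul_one]; exact hx k)).1 h2.symm
      apply D.b.repr.injective
      ext k
      have := h3 k (Finset.mem_univ k)
      rw [D.hu, mul_one] at this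
      simp [this]
    rw [this, gauge_zero, map_zero]
  · have hmem : (D.u x)⁻¹ • x ∈ newtonPolytope f :=
      D.mem_P (D.smul_C hx (inv_nonneg.2 h.le)) (by rw [map_smul, smul_eq_mul, inv_mul_cancel₀ h.ne'])
    have hmem' : x ∈ D.u x • newtonPolytope f :=
      ⟨_, hmem, by simp only [smul_smul]; rw [mul_inv_cancel₀ h.ne', one_smul]⟩
    apply le_antisymm
    · exact gauge_le_of_mem h.le hmem'
    · refine le_csInf ⟨_, h, hmem'⟩ ?_
      rintro r ⟨hr, y, hy, rfl⟩
      simp only [map_smul, smul_eq_mul]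
      have := P_le D.u zero_le_one D.le_one hy
      nlinarith

/-- the staircase structure associated with a generic positive vector -/
theorem exists_geo (hn : 1 ≤ n) (hconv : Convenient f) (hD : ∀ u, IsFct f u → ∃ i, (D i).u = u)
    (ξ : Fin n → ℝ) (hξ : ∀ i, 0 < ξ i) (hinj : Function.Injective fun i => (D i).u ξ) :
    ∃ H : Geo f ι, H.D = D ∧ H.ξ = ξ ∧ ∀ a, toR a ∈ (D (H.t a)).C := by
  have hne : Nonempty ι := ⟨(exists_cone D hn hconv hD 0 (by simp)).choose⟩
  have hex := fun a : Fin n →₀ ℕ =>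
    Finite.exists_max (fun i => toLex ((D i).u (toR a), (D i).u ξ))
  choose t ht using hex
  have hu : ∀ i (a : Fin n →₀ ℕ) (ε : ℝ), (D i).u (toR a + ε • ξ) = (D i).u (toR a) + ε * (D i).u ξ := by
    intro i a ε; rw [map_add, map_smul, smul_eq_mul]
  have hr : ∀ i (a : Fin n →₀ ℕ) (ε : ℝ) k, (D i).b.repr (toR a + ε • ξ) k =
      (D i).b.repr (toR a) k + ε * (D i).b.repr ξ k := by
    intro i a ε k; simp
  have hmax : ∀ a, ∀ᶠ ε in 𝓝[>] (0:ℝ), toR a + ε • ξ ∈ (D (t a)).C := by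
    intro a
    have h1 : ∀ᶠ ε in 𝓝[>] (0:ℝ), ∀ i, (D i).u (toR a + ε • ξ) ≤ (D (t a)).u (toR a + ε • ξ) := by
      rw [eventually_all]
      intro i
      have h2 := ht a i
      rw [Prod.Lex.le_iff] at h2
      rcases h2 with h2 | ⟨h2, h3⟩
      · have h2 : (D i).u (toR a) < (D (t a)).u (toR a) := h2
        have hc : Continuous fun ε : ℝ => (D (t a)).u (toR a + ε • ξ) - (D i).u (toR a + ε • ξ) := by
          simp only [hu]; fun_prop
        have := ((hc.tendsto 0).eventually (lt_mem_nhds (a := 0) (by simpa using h2))).filter_mono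
          (nhdsWithin_le_nhds (s := Set.Ioi 0))
        filter_upwards [this] with ε hε
        linarith
      · have h2 : (D i).u (toR a) = (D (t a)).u (toR a) := h2
        have h3 : (D i).u ξ ≤ (D (t a)).u ξ := h3
        filter_upwards [self_mem_nhdsWithin] with ε hε
        have hε : 0 < ε := hε
        rw [hu, hu, h2]
        have := mul_le_mul_of_nonneg_left h3 hε.le
        linarith
    filter_upwards [h1, self_mem_nhdsWithin] with ε h2 h3
    refine cone_of_max D hn hconv hD _ (fun i => ?_) _ h2
    have := mul_pos (show (0:ℝ) < ε from h3) (hξ i)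
    have h0 : (0:ℝ) ≤ toR a i := by simp [toR]
    simp; linarith
  have hlim : ∀ a i, (∀ᶠ ε in 𝓝[>] (0:ℝ), toR a + ε • ξ ∈ (D i).C) → toR a ∈ (D i).C := by
    intro a i h
    have hc : Continuous fun ε : ℝ => toR a + ε • ξ := by fun_prop
    have h1 : Tendsto (fun ε : ℝ => toR a + ε • ξ) (𝓝[>] 0) (𝓝 (toR a)) := by
      have := (hc.tendsto 0).mono_left (nhdsWithin_le_nhds (s := Set.Ioi 0))
      simpa using this
    exact (D i).isClosed_C.mem_of_tendsto h1 h
  refine ⟨⟨D, ξ, t, fun a i => ht a i, hinj, fun a i => ⟨fun hS => ?_, ?_⟩⟩, rfl, rfl, fun a => hlim a _ (hmax a)⟩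
  · have h1 : ∀ᶠ ε in 𝓝[>] (0:ℝ), toR a + ε • ξ ∈ (D i).C := by
      have : ∀ᶠ ε in 𝓝[>] (0:ℝ), ∀ k, 0 ≤ (D i).b.repr (toR a + ε • ξ) k := by
        rw [eventually_all]
        intro k
        obtain ⟨h2, h3⟩ := hS k
        by_cases hk : (D i).b.repr ξ k < 0
        · have h3 : 0 < (D i).b.repr (toR a) k := h3 hk
          have hc : Continuous fun ε : ℝ => (D i).b.repr (toR a + ε • ξ) k := by
            simp only [hr]; fun_prop
          have := ((hc.tendsto 0).eventually (lt_mem_nhds (a := 0) (by simpa using h3))).filter_mono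
            (nhdsWithin_le_nhds (s := Set.Ioi 0))
          filter_upwards [this] with ε hε
          exact hε.le
        · filter_upwards [self_mem_nhdsWithin] with ε hε
          rw [hr]
          have := mul_nonneg (le_of_lt (show 0 < ε from hε)) (not_lt.1 hk)
          have h2 : 0 ≤ (D i).b.repr (toR a) k := h2
          linarith
      exact this
    have hC : toR a ∈ (D i).C := hlim a i h1
    have h2 := (D i).le_of_C (D (t a)) hC
    have h3 := ht a i
    rw [Prod.Lex.le_iff] at h3
    rcases h3 with h3 | ⟨h3, h4⟩
    · exact absurd h2 (not_le.2 h3)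
    · have h3 : (D i).u (toR a) = (D (t a)).u (toR a) := h3
      have h4 : (D i).u ξ ≤ (D (t a)).u ξ := h4
      obtain ⟨ε, h5, h6⟩ := (h1.and self_mem_nhdsWithin).exists
      have h6 : 0 < ε := h6
      have h7 := (D i).le_of_C (D (t a)) h5
      rw [hu, hu, h3] at h7
      have h8 : (D (t a)).u ξ ≤ (D i).u ξ := by
        by_contra hh
        nlinarith
      exact hinj (le_antisymm h8 h4)
  · rintro rfl k
    refine ⟨hlim a _ (hmax a) k, fun hk => ?_⟩
    have hk : (D (t a)).b.repr ξ k < 0 := hk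
    obtain ⟨ε, h5, h6⟩ := ((hmax a).and self_mem_nhdsWithin).exists
    have h6 : 0 < ε := h6
    have h7 := h5 k
    rw [hr] at h7
    show 0 < (D (t a)).b.repr (toR a) k
    nlinarith

end Fan
end ToricNewton

namespace ToricNewton

section Main
open Filter Topology
variable {n : ℕ} {f : MvPolynomial (Fin n) ℂ}

theorem grN_ne_bot {ι : Type} [Finite ι] (D : ι → Facet f) (hn : 1 ≤ n) (hconv : Convenient f)
    (hD : ∀ u, IsFct f u → ∃ i, (D i).u = u) (hDinj : Function.Injective fun i => (D i).u)
    (i₁ : ι) (V : Fin n →₀ ℕ) (hV1 : ∀ i, 1 ≤ V i) (hV : toR V ∈ (D i₁).C)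
    (hlt : ∀ k, (D i₁).b.repr (toR V) k < 1) (J : Finset (Fin n))
    (hJ : ∀ k ∈ J, (D i₁).b.repr (toR V) k = 0) :
    grN f (nu f (toR V) + (J.card : ℝ)) ≠ ⊥ := by
  classical
  have := Fintype.ofFinite ι
  -- the generic vector
  obtain ⟨η, hη, hηW⟩ := gen_exists
    (Set.range fun p : {p : ι × ι // p.1 ≠ p.2} => LinearMap.ker ((D p.1.1).u - (D p.1.2).u))
    (Set.finite_range _) (by
      rintro ⟨⟨⟨i, i'⟩, hne⟩, h⟩
      rw [LinearMap.ker_eq_top, sub_eq_zero] at h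
      exact hne (hDinj h))
  let y : Fin n → ℝ := (D i₁).b.equivFun.symm fun k => if k ∈ J then -1 else 1
  have hy : ∀ k, (D i₁).b.repr y k = if k ∈ J then -1 else 1 := by
    intro k
    rw [← Module.Basis.equivFun_apply, LinearEquiv.apply_symm_apply]
  have hVpos : ∀ i, 0 < toR V i := fun i => by
    have := hV1 i
    simp only [toR, Nat.cast_pos]; omega
  obtain ⟨δ, hδ, hδ0⟩ := ((ev_pos hVpos y).and self_mem_nhdsWithin).exists
  have hδ0 : 0 < δ := hδ0
  set ξ₀ := toR V + δ • y with hξ₀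
  have hξ₀r : ∀ k, (D i₁).b.repr ξ₀ k = (D i₁).b.repr (toR V) k + δ * (if k ∈ J then -1 else 1) := by
    intro k; rw [hξ₀, ← hy]; simp
  have hcr : ∀ k, Continuous fun ε : ℝ => (D i₁).b.repr (ξ₀ + ε • η) k := by
    intro k
    simp only [map_add, map_smul, Finsupp.add_apply, Finsupp.smul_apply, smul_eq_mul]
    fun_prop
  have hneg : ∀ᶠ ε in 𝓝[>] (0:ℝ), ∀ k, k ∈ J → (D i₁).b.repr (ξ₀ + ε • η) k < 0 := by
    rw [eventually_all]
    intro k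
    rw [eventually_imp_distrib_left]
    intro hk
    refine (((hcr k).tendsto 0).eventually (gt_mem_nhds (a := 0) ?_)).filter_mono nhdsWithin_le_nhds
    rw [zero_smul, add_zero, hξ₀r, hJ k hk, if_pos hk]
    linarith
  have hpos : ∀ᶠ ε in 𝓝[>] (0:ℝ), ∀ k, k ∉ J → 0 < (D i₁).b.repr (ξ₀ + ε • η) k := by
    rw [eventually_all]
    intro k
    rw [eventually_imp_distrib_left]
    intro hk
    refine (((hcr k).tendsto 0).eventually (lt_mem_nhds (a := 0) ?_)).filter_mono nhdsWithin_le_nhds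
    rw [zero_smul, add_zero, hξ₀r, if_neg hk]
    have := hV k
    linarith
  have hgen : ∀ᶠ ε in 𝓝[>] (0:ℝ), ∀ p : {p : ι × ι // p.1 ≠ p.2},
      ξ₀ + ε • η ∉ LinearMap.ker ((D p.1.1).u - (D p.1.2).u) := by
    rw [eventually_all]
    exact fun p => gen_ev _ (hηW _ ⟨p, rfl⟩) _
  obtain ⟨ε, ⟨⟨hneg, hpos⟩, hgen⟩, hξpos⟩ := (((hneg.and hpos).and hgen).and (ev_pos hδ η)).exists
  set ξ := ξ₀ + ε • η with hξ
  have hinj : Function.Injective fun i => (D i).u ξ := by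
    intro i i' h
    by_contra hne
    refine hgen ⟨(i, i'), hne⟩ ?_
    rw [LinearMap.mem_ker, LinearMap.sub_apply, sub_eq_zero]
    exact h
  obtain ⟨H, rfl, hHξ, hC⟩ := exists_geo D hn hconv hD ξ hξpos hinj
  -- the witness
  let w : Fin n →₀ ℕ := V + ∑ k ∈ J, (H.D i₁).β k
  have htoR : toR w = toR V + ∑ k ∈ J, (H.D i₁).b k := by
    have hsum : ∀ S : Finset (Fin n), toR (∑ k ∈ S, (H.D i₁).β k) = ∑ k ∈ S, (H.D i₁).b k := by
      intro S
      induction S using Finset.induction_on with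
      | empty => simp [toR_zero]
      | insert k S hk ih => rw [Finset.sum_insert hk, Finset.sum_insert hk, toR_add, ih, (H.D i₁).hb]
    rw [toR_add, hsum]
  have hcw : ∀ k, (H.D i₁).c w k = (H.D i₁).b.repr (toR V) k + if k ∈ J then 1 else 0 := by
    intro k
    unfold Facet.c
    rw [htoR, map_add, Finsupp.add_apply, map_sum, Finsupp.finsetSum_apply]
    simp [Finsupp.single_apply]
  have huw : (H.D i₁).u (toR w) = nu f (toR V) + (J.card : ℝ) := by
    rw [(H.D i₁).nu_eq hV, htoR, map_add, map_sum]
    simp [(H.D i₁).hu]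
  have hSw : (H.D i₁).S (H.σ i₁) w := by
    intro k
    rw [hcw]
    have h0 := hV k
    refine ⟨by split_ifs <;> linarith, fun hk => ?_⟩
    have hk : (H.D i₁).b.repr H.ξ k < 0 := hk
    by_cases hkJ : k ∈ J
    · rw [if_pos hkJ]; linarith
    · have := hpos k hkJ
      rw [← hHξ] at this
      exact absurd hk (not_lt.2 this.le)
  have hno : ∀ p a', (H.D i₁).S (H.σ i₁) a' → w ≠ a' + (H.D i₁).β p := by
    intro p a' ha' he
    have h1 := hcw p
    rw [he, Facet.c_add, Facet.c_β] at h1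
    have h2 := (ha' p).1
    by_cases hp : p ∈ J
    · rw [if_pos hp, hJ p hp] at h1
      have h3 : p ∈ H.σ i₁ := by
        show (H.D i₁).b.repr H.ξ p < 0
        rw [hHξ]
        exact hneg p hp
      have h4 := (ha' p).2 h3
      simp at h1
      linarith
    · rw [if_neg hp] at h1
      have := hlt p
      simp at h1
      linarith
  obtain ⟨g, hg, hgU⟩ := (H.D i₁).nonvanish _ w hSw huw hno
  intro hbot
  apply hgU
  have hgN : g.1 ∈ Nle f (nu f (toR V) + (J.card : ℝ)) := by
    intro m hm
    have hmC : toR m ∈ (H.D i₁).C := fun k => (g.2 m hm k).1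
    rw [(H.D i₁).nu_eq hmC]
    exact (hg m hm).le
  have h0 : (Nlt f (nu f (toR V) + (J.card : ℝ)) ⊔ (LIdeal f).restrictScalars ℂ).mkQ g.1 = 0 := by
    have : (Nlt f (nu f (toR V) + (J.card : ℝ)) ⊔ (LIdeal f).restrictScalars ℂ).mkQ g.1 ∈
        grN f (nu f (toR V) + (J.card : ℝ)) :=
      Submodule.mem_map_of_mem (Submodule.mem_sup_left hgN)
    rw [hbot] at this
    exact (Submodule.mem_bot _).1 this
  rw [Submodule.mkQ_apply, Submodule.Quotient.mk_eq_zero, Submodule.mem_sup] at h0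
  obtain ⟨g0, hg0, l, hl, hgl⟩ := h0
  rw [Submodule.restrictScalars_mem, LIdeal, Ideal.mem_span_range_iff_exists_fun] at hl
  obtain ⟨h, hh⟩ := hl
  refine H.final i₁ _ g hg g0 (fun a ha => ?_) h ?_
  · rw [← (H.D (H.t a)).nu_eq (hC a)]
    exact hg0 a ha
  · rw [← hgl, add_sub_cancel_left, ← hh]
    exact Finset.sum_congr rfl fun j _ => mul_comm _ _

theorem face_data {Δ : Set (Fin n → ℝ)} (hΔ : NBFace f Δ) : ∃ (l : (Fin n → ℝ) →ₗ[ℝ] ℝ) (c : ℝ),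
    0 < c ∧ (∀ x ∈ newtonPolytope f, l x ≤ c) ∧ Δ = {x ∈ newtonPolytope f | l x = c} := by
  obtain ⟨⟨_, l, c, h1, h2⟩, h0⟩ := hΔ
  refine ⟨l, c, ?_, h1, h2⟩
  have h3 := h1 0 zero_mem_P
  rw [map_zero] at h3
  refine lt_of_le_of_ne h3 fun h => h0 ?_
  rw [h2]
  exact ⟨zero_mem_P, by rw [map_zero]; exact h⟩

theorem Facet.b_mem (D : Facet f) (k : Fin n) : D.b k ∈ newtonPolytope f := by
  rw [D.hb]; exact toR_mem_P (D.mem k)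

theorem Facet.l_le (D : Facet f) (l : (Fin n → ℝ) →ₗ[ℝ] ℝ) {c : ℝ}
    (h : ∀ x ∈ newtonPolytope f, l x ≤ c) {x : Fin n → ℝ} (hx : x ∈ D.C) : l x ≤ c * D.u x := by
  rw [D.u_sum l, D.u_sum D.u, Finset.mul_sum]
  refine Finset.sum_le_sum fun k _ => ?_
  rw [D.hu]
  have := mul_le_mul_of_nonneg_left (h _ (D.b_mem k)) (hx k)
  linarith

theorem Facet.card_le (D : Facet f) {Δ : Set (Fin n → ℝ)} (hΔ : NBFace f Δ) {x : Fin n → ℝ}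
    (hx : x ∈ D.C) (hxΔ : x ∈ cone0 Δ) (Z : Finset (Fin n)) (hZ : ∀ k ∈ Z, 0 < D.b.repr x k) :
    Z.card ≤ faceDim Δ + 1 := by
  obtain ⟨l, c, hc, hl, rfl⟩ := face_data hΔ
  obtain ⟨t, ht, y, ⟨hyP, hyc⟩, rfl⟩ := hxΔ
  have h1 : D.u (t • y) ≤ t := by
    rw [map_smul, smul_eq_mul]
    have := P_le D.u zero_le_one D.le_one hyP
    nlinarith
  have h2 : ∀ k, D.b.repr (t • y) k * (c - l (D.b k)) = 0 := by
    have hnn : ∀ k ∈ Finset.univ, 0 ≤ D.b.repr (t • y) k * (c - l (D.b k)) :=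
      fun k _ => mul_nonneg (hx k) (sub_nonneg.2 (hl _ (D.b_mem k)))
    have : ∑ k, D.b.repr (t • y) k * (c - l (D.b k)) = 0 := by
      apply le_antisymm _ (Finset.sum_nonneg hnn)
      have e1 := D.u_sum l (t • y)
      have e2 := D.u_sum D.u (t • y)
      simp only [D.hu, mul_one] at e2
      simp only [mul_sub, Finset.sum_sub_distrib, ← Finset.sum_mul]
      rw [← e1, ← e2, map_smul l, smul_eq_mul, hyc]
      nlinarith
    intro k
    exact (Finset.sum_eq_zero_iff_of_nonneg hnn).1 this k (Finset.mem_univ k)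
  let p : Z → (Fin n → ℝ) := fun k => D.b k
  have hp : AffineIndependent ℝ p :=
    (D.b.linearIndependent.comp (fun k : Z => k.1) Subtype.val_injective).affineIndependent
  have hcard := hp.card_le_finrank_succ
  rw [Fintype.card_coe] at hcard
  refine hcard.trans (Nat.add_le_add_right ?_ 1)
  unfold faceDim
  rw [direction_affineSpan]
  refine Submodule.finrank_mono (vectorSpan_mono ℝ ?_)
  rintro _ ⟨⟨k, hk⟩, rfl⟩
  refine ⟨D.b_mem k, ?_⟩
  have := (mul_eq_zero.1 (h2 k)).resolve_left (hZ k hk).ne'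
  show l (D.b k) = c
  linarith

theorem ext_of_face {l : (Fin n → ℝ) →ₗ[ℝ] ℝ} {c : ℝ} (hl : ∀ x ∈ newtonPolytope f, l x ≤ c)
    {x : Fin n → ℝ} (hx : x ∈ Set.extremePoints ℝ {x ∈ newtonPolytope f | l x = c}) :
    x ∈ Set.extremePoints ℝ (newtonPolytope f) := by
  rw [mem_extremePoints] at hx ⊢
  refine ⟨hx.1.1, fun x₁ h₁ x₂ h₂ hs => ?_⟩
  obtain ⟨a, b, ha, hb, hab, he⟩ := id hs
  have e : a * l x₁ + b * l x₂ = c := by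
    rw [← hx.1.2, ← he, map_add, map_smul, map_smul, smul_eq_mul, smul_eq_mul]
  have l1 := hl _ h₁
  have l2 := hl _ h₂
  refine hx.2 x₁ ⟨h₁, ?_⟩ x₂ ⟨h₂, ?_⟩ hs
  · apply le_antisymm l1
    by_contra h
    push Not at h
    have : a * l x₁ < a * c := mul_lt_mul_of_pos_left h ha
    have : b * l x₂ ≤ b * c := mul_le_mul_of_nonneg_left l2 hb.le
    have : a * c + b * c = c := by rw [← add_mul, hab, one_mul]
    linarith
  · apply le_antisymm l2
    by_contra h
    push Not at h
    have : a * l x₁ ≤ a * c := mul_le_mul_of_nonneg_left l1 ha.le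
    have : b * l x₂ < b * c := mul_lt_mul_of_pos_left h hb
    have : a * c + b * c = c := by rw [← add_mul, hab, one_mul]
    linarith

theorem Facet.ext_eq (D : Facet f) {x : Fin n → ℝ}
    (hx : x ∈ Set.extremePoints ℝ (newtonPolytope f)) (hu : D.u x = 1) : ∃ k, x = D.b k := by
  have hxC := tight_nonneg D hx.1 hu
  have hB : convexHull ℝ (Set.range D.b) ⊆ newtonPolytope f := by
    refine convexHull_min ?_ convex_P
    rintro _ ⟨k, rfl⟩
    exact D.b_mem k
  have hxB : x ∈ convexHull ℝ (Set.range D.b) := by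
    rw [← D.b.sum_repr x]
    refine (convex_convexHull ℝ _).sum_mem (fun k _ => hxC k) ?_ fun k _ => subset_convexHull ℝ _ ⟨k, rfl⟩
    rw [← hu, D.u_sum D.u]; simp [D.hu]
  obtain ⟨k, hk⟩ := extremePoints_convexHull_subset
    (inter_extremePoints_subset_extremePoints_of_subset hB ⟨hxB, hx⟩)
  exact ⟨k, hk.symm⟩

theorem Facet.lt_one (D : Facet f) {x : Fin n → ℝ} (hx : x ∈ D.C) (hbox : x ∈ BoxP f) (k : Fin n) :
    D.b.repr x k < 1 := by
  classical
  simp only [BoxP, Set.mem_iUnion] at hbox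
  obtain ⟨Δ, ⟨hΔ, _⟩, s, hs, q, hq, hxs⟩ := hbox
  obtain ⟨l, c, hc, hl, rfl⟩ := face_data hΔ
  have hsΔ : ∀ b ∈ s, b ∈ newtonPolytope f ∧ l b = c := fun b hb => (hs hb).1
  have e1 : l x = c * ∑ b ∈ s, q b := by
    rw [hxs, map_sum, Finset.mul_sum]
    exact Finset.sum_congr rfl fun b hb => by rw [map_smul, (hsΔ b hb).2, smul_eq_mul, mul_comm]
  have e2 := D.l_le l hl hx
  rw [e1] at e2
  have e3 : ∑ b ∈ s, q b ≤ D.u x := le_of_mul_le_mul_left e2 hc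
  have e4 : D.u x = ∑ b ∈ s, q b * D.u b := by
    rw [hxs, map_sum]
    exact Finset.sum_congr rfl fun b hb => by rw [map_smul, smul_eq_mul]
  have hu1 : ∀ b ∈ s, D.u b ≤ 1 := fun b hb => P_le D.u zero_le_one D.le_one (hsΔ b hb).1
  have hnn : ∀ b ∈ s, 0 ≤ q b * (1 - D.u b) := fun b hb =>
    mul_nonneg (hq b hb).1 (sub_nonneg.2 (hu1 b hb))
  have h0 : ∑ b ∈ s, q b * (1 - D.u b) = 0 := by
    apply le_antisymm _ (Finset.sum_nonneg hnn)
    simp only [mul_sub, mul_one, Finset.sum_sub_distrib]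
    rw [← e4]; linarith
  rw [Finset.sum_eq_zero_iff_of_nonneg hnn] at h0
  have hr : D.b.repr x k = ∑ b ∈ s, if b = D.b k then q b else 0 := by
    rw [hxs, map_sum, Finsupp.finsetSum_apply]
    refine Finset.sum_congr rfl fun b hb => ?_
    rw [map_smul, Finsupp.smul_apply, smul_eq_mul]
    rcases mul_eq_zero.1 (h0 b hb) with h | h
    · rw [h]; simp
    · obtain ⟨k', rfl⟩ := D.ext_eq (ext_of_face hl (hs hb)) (by linarith)
      rw [D.b.repr_self, Finsupp.single_apply]
      by_cases hk : k' = k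
      · rw [if_pos hk, hk, if_pos rfl, mul_one]
      · rw [if_neg hk, if_neg (fun h => hk (D.b.injective h)), mul_zero]
  rw [hr, Finset.sum_ite_eq']
  split_ifs with h
  · exact (hq _ h).2
  · exact one_pos

end Main
end ToricNewton


open ToricNewton in
/-- integral shifts in the toric Newton spectrum: if
`v ∈ Box(P) ∩ ℕⁿ` has all coordinates `≥ 1` and `Δ(v)` is the smallest closed
face of the Newton boundary whose cone contains `v`, then the values
`ν(v), ν(v)+1, …, ν(v)+n-1-dim Δ(v)` all occur in the toric Newton spectrum. -/
theorem integral_shifts_in_toric_spectrum {n : ℕ} (hn : 1 ≤ n)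
    (f : MvPolynomial (Fin n) ℂ) (hconv : Convenient f) (hnd : Nondegenerate f)
    (hsimp : ∀ Δ : Set (Fin n → ℝ), NBFace f Δ → IsSimplex Δ)
    (v : Fin n → ℕ) (hv : natToR v ∈ BoxP f) (hv1 : ∀ i, 1 ≤ v i)
    (Δ₀ : Set (Fin n → ℝ)) (hΔ₀ : NBFace f Δ₀) (hvΔ₀ : natToR v ∈ cone0 Δ₀)
    (hmin : ∀ Δ : Set (Fin n → ℝ), NBFace f Δ → natToR v ∈ cone0 Δ → Δ₀ ⊆ Δ) :
    ∀ j : ℕ, j ≤ n - 1 - faceDim Δ₀ →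
      grN f (nu f (natToR v) + (j : ℝ)) ≠ ⊥ := by
  classical
  intro j hj
  have hfin : Finite {u : (Fin n → ℝ) →ₗ[ℝ] ℝ // IsFct f u} := fct_finite.to_subtype
  choose D hD using fun u : {u : (Fin n → ℝ) →ₗ[ℝ] ℝ // IsFct f u} =>
    exists_facet hn hnd hsimp u.1 u.2
  have hDs : ∀ u, IsFct f u → ∃ i, (D i).u = u := fun u hu => ⟨⟨u, hu⟩, hD _⟩
  have hDi : Function.Injective fun i => (D i).u := by
    intro i i' h
    have h : (D i).u = (D i').u := h
    rw [hD, hD] at h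
    exact Subtype.ext h
  let V : Fin n →₀ ℕ := Finsupp.equivFunOnFinite.symm v
  have hV : toR V = natToR v := rfl
  obtain ⟨i₁, hi₁⟩ := exists_cone D hn hconv hDs (natToR v) (fun i => by simp [natToR])
  let Z : Finset (Fin n) := Finset.univ.filter fun k => 0 < (D i₁).b.repr (natToR v) k
  have hZ : Z.card ≤ faceDim Δ₀ + 1 :=
    (D i₁).card_le hΔ₀ hi₁ hvΔ₀ Z (fun k hk => (Finset.mem_filter.1 hk).2)
  have hZc : j ≤ Zᶜ.card := by
    rw [Finset.card_compl, Fintype.card_fin]; omega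
  obtain ⟨J, hJ, hJc⟩ := Finset.exists_subset_card_eq hZc
  rw [← hV, ← hJc]
  refine grN_ne_bot D hn hconv hDs hDi i₁ V hv1 hi₁ ((D i₁).lt_one hi₁ hv) J fun k hk => ?_
  have h1 := hJ hk
  rw [Finset.mem_compl, Finset.mem_filter] at h1
  have h2 : ¬ 0 < (D i₁).b.repr (natToR v) k := fun h => h1 ⟨Finset.mem_univ _, h⟩
  exact le_antisymm (not_lt.1 h2) (hi₁ k)
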